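/- Cancellation of higher order terms, scalar-H case (Corollary 4.8, estimate (K), for classical functions). Let n ≥ 3, Ω ⊆ ℝⁿ a domain, 2 ≤ k ≤ n, H₂ : Ω×ℝ×ℝⁿ → ℝ C^{1,1}_loc, and H(x,z,ξ) := H₂(x,z,ξ)I. Fix concentric balls with closure(B_{2R}) ⊂ Ω, and constants M > 0 and c₀ > 0. Then there is a constant C, depending only on n, k, R, H₂, M and c₀, such that the following holds. Let u ∈ C³(Ω) with sup_{B_{2R}}(|u|+|∇u|) ≤ M; let C₁ ∈ [0,M] satisfy Δu + C₁ ≥ 1 and |∇²u| ≤ Δu + C₁ pointwise on B_{2R}; let q > 1, ρ ∈ (0,R/3], 0 < |h| < ρ, and let η be a smooth function supported in B_{R+2ρ} with 0 ≤ η ≤ 1, η ≡ 1 on B_{R+ρ}, |∇η| ≤ c₀/ρ and |∇²η| ≤ c₀/ρ². Set ṽ := v_h + C₁. Then ∫_{B_{R+2ρ}} η (ṽ⁺)^{q−1} Σ_j (Σ_i ∂_i(F[u]^{ij})) ∂_j ṽ + Σ_{l=1}^n ∫_{B_{R+2ρ}} η (ṽ⁺)^{q−1} Σ_{i,j} F[u]^{ij}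 Δ_{ll}^h((H[u])_{ij}) ≥ −(C/ρ)·( ∫_{B_{R+2ρ}}(ṽ⁺)^{q+k} + ∫_{B_{R+3ρ}}(Δu+C₁)^{q+k} ). -/

import Mathlib

open MeasureTheory Metric Set Matrix

noncomputable section

/-- The `k`-th elementary symmetric polynomial of the eigenvalues of an `n × n` real
matrix, defined via the coefficients of the characteristic polynomial. -/
def esymmMat {n : ℕ} (k : ℕ) (A : Matrix (Fin n) (Fin n) ℝ) : ℝ :=
  (-1 : ℝ) ^ k * A.charpoly.coeff (n - k)

/-- `λ(A) ∈ Γ_k^+`, i.e. `σ_j(A) > 0` for all `1 ≤ j ≤ k`. -/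
def GammaPlus {n : ℕ} (k : ℕ) (A : Matrix (Fin n) (Fin n) ℝ) : Prop :=
  ∀ j : ℕ, 1 ≤ j → j ≤ k → 0 < esymmMat j A

/-- The Newton tensors `T_0(A) = I`, `T_j(A) = σ_j(A) I - T_{j-1}(A) A`. -/
def newtonT {n : ℕ} : ℕ → Matrix (Fin n) (Fin n) ℝ → Matrix (Fin n) (Fin n) ℝ
  | 0, _ => 1
  | (j + 1), A => esymmMat (j + 1) A • (1 : Matrix (Fin n) (Fin n) ℝ) - newtonT j A * A

/-- `i`-th partial derivative. -/
def pd {n : ℕ} (i : Fin n) (w : (Fin n → ℝ) → ℝ) (x : Fin n → ℝ) : ℝ :=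
  fderiv ℝ w x (Pi.single i 1)

/-- Gradient as a vector. -/
def grad {n : ℕ} (w : (Fin n → ℝ) → ℝ) (x : Fin n → ℝ) : Fin n → ℝ :=
  fun i => pd i w x

/-- Hessian matrix. -/
def hess {n : ℕ} (w : (Fin n → ℝ) → ℝ) (x : Fin n → ℝ) : Matrix (Fin n) (Fin n) ℝ :=
  Matrix.of fun i j => pd i (pd j w) x

/-- Squared Euclidean norm of a vector. -/
def normSq {n : ℕ} (ξ : Fin n → ℝ) : ℝ := ∑ i, ξ i ^ 2

/-- Euclidean norm of a vector. -/
def vnorm {n : ℕ} (ξ : Fin n → ℝ) : ℝ := Real.sqrt (∑ i, ξ i ^ 2)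

/-- Operator norm of a matrix, viewed as a linear map between Euclidean spaces. -/
def matNorm {n : ℕ} (M : Matrix (Fin n) (Fin n) ℝ) : ℝ :=
  ‖LinearMap.toContinuousLinearMap (Matrix.toEuclideanLin M)‖

/-- Laplacian. -/
def lapl {n : ℕ} (w : (Fin n → ℝ) → ℝ) (x : Fin n → ℝ) : ℝ := ∑ l, pd l (pd l w) x

/-- `W^{2,p}` norm (with classical derivatives) on a set. -/
def W2pNorm {n : ℕ} (p : ℝ) (w : (Fin n → ℝ) → ℝ) (B : Set (Fin n → ℝ)) : ℝ :=
  (∫ x in B, (|w x| ^ p + vnorm (grad w x) ^ p + matNorm (hess w x) ^ p)) ^ (1 / p)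

/-- `C^{1,1}_loc` on a set: continuously differentiable with locally Lipschitz
first derivatives. -/
def C11On {E F : Type*} [NormedAddCommGroup E] [NormedSpace ℝ E]
    [NormedAddCommGroup F] [NormedSpace ℝ F] (f : E → F) (s : Set E) : Prop :=
  ContDiffOn ℝ 1 f s ∧
    ∀ x ∈ s, ∃ (K : NNReal) (t : Set E), t ∈ nhdsWithin x s ∧
      LipschitzOnWith K (fderivWithin ℝ f s) t

/-- First order difference quotient `∇_l^h`. -/
def dq {n : ℕ} (l : Fin n) (h : ℝ) (w : (Fin n → ℝ) → ℝ) (x : Fin n → ℝ) : ℝ :=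
  (w (x + h • (Pi.single l 1 : Fin n → ℝ)) - w x) / h

/-- Second order difference quotient `Δ_{ll}^h`. -/
def ddq {n : ℕ} (l : Fin n) (h : ℝ) (w : (Fin n → ℝ) → ℝ) (x : Fin n → ℝ) : ℝ :=
  (w (x + h • (Pi.single l 1 : Fin n → ℝ)) - 2 * w x + w (x - h • (Pi.single l 1 : Fin n → ℝ))) / h ^ 2

/-- `L^s` seminorm (as an extended real number) of a function on a set. -/
def lpN {n : ℕ} (s : ℝ) (w : (Fin n → ℝ) → ℝ) (S : Set (Fin n → ℝ)) : ENNReal :=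
  (∫⁻ x in S, ENNReal.ofReal (|w x| ^ s)) ^ (1 / s)

end

/-!
Write `A = ∇²u - φ I` with `φ = H₂(x, u, ∇u)`. Up to the gradient of `φ`, `A` satisfies the
Codazzi equations, so that `div T_{k-1}(A) = -(n-k+1) T_{k-2}(A) ∇φ`. The chain rule gives
`∇φ = β + A b` with `b = ∂H₂/∂ξ` and `β` free of second derivatives, and
`T_{k-2}(A) A = σ_{k-1}(A) I - T_{k-1}(A)` turns the first integrand into
`-(n-k+1) σ_{k-1} b · ∇ṽ` plus multiples of `b · T_{k-1} ∇ṽ` and `β · T_{k-2} ∇ṽ`.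
On the other hand `tr T_{k-1}(A) = (n-k+1) σ_{k-1}`, and expanding `H₂` to second order shows that
`∑ₗ Δₗₗʰ φ` is `b · ∇ṽ` up to a remainder quadratic in second derivatives. Hence the terms carrying
`σ_{k-1} b · ∇ṽ` cancel. In the surviving first order terms the coefficients `b` and `β` are
locally Lipschitz, so an integration by parts removes the third derivatives of `u`; Young's
inequality and averaging over translated balls then produce the powers `q + k`.
-/

/-! ### Elementary symmetric functions and Newton tensors -/

section NewtonTensors

lemma hasDerivAt_det {𝕜 ι : Type*} [NontriviallyNormedField 𝕜] [Fintype ι] [DecidableEq ι]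
    {M : 𝕜 → Matrix ι ι 𝕜} {M' : Matrix ι ι 𝕜} {s : 𝕜}
    (hM : ∀ i j, HasDerivAt (fun t => M t i j) (M' i j) s) :
    HasDerivAt (fun t => (M t).det) (trace (adjugate (M s) * M')) s := by
  let D : ContinuousMultilinearMap 𝕜 (fun _ : ι => ι → 𝕜) 𝕜 :=
    ⟨(detRowAlternating (n := ι) (R := 𝕜)).toMultilinearMap, continuous_id.matrix_det⟩
  have hrow i : HasDerivAt (fun t => M t i) (M' i) s := hasDerivAt_pi.2 (hM i)
  have hD : HasDerivAt (fun t => (M t).det) (∑ i, ((M s).updateRow i (M' i)).det) s := by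
    simpa using! (HasFDerivAt.multilinear_comp D fun i => (hrow i).hasFDerivAt).hasDerivAt
  convert hD using 1
  simp only [← cramer_transpose_apply, cramer_eq_adjugate_mulVec, ← adjugate_transpose]
  rw [trace_mul_comm]
  simp only [trace, diag_apply, Matrix.mul_apply, mulVec, dotProduct, transpose_apply, mul_comm]

lemma coeff_eq_of_eventually_sum_eq {N : ℕ} {a b : ℕ → ℝ}
    (h : ∀ᶠ s : ℝ in nhds 0,
      ∑ m ∈ Finset.range N, s ^ m * a m = ∑ m ∈ Finset.range N, s ^ m * b m)
    {m : ℕ} (hm : m < N) : a m = b m := by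
  have hpoly := Polynomial.eq_of_infinite_eval_eq
    (∑ m ∈ Finset.range N, Polynomial.C (a m) * Polynomial.X ^ m)
    (∑ m ∈ Finset.range N, Polynomial.C (b m) * Polynomial.X ^ m)
    ((infinite_of_mem_nhds 0 h).mono fun s hs => by
      simpa only [Polynomial.eval_finsetSum, Polynomial.eval_mul, Polynomial.eval_C,
        Polynomial.eval_pow, Polynomial.eval_X, mul_comm] using hs)
  simpa [Polynomial.finsetSum_coeff, Polynomial.coeff_X_pow, hm] using
    congrArg (fun p => Polynomial.coeff p m) hpoly

variable {n : ℕ} (A : Matrix (Fin n) (Fin n) ℝ)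

lemma det_one_add_smul_eq_sum_esymmMat (s : ℝ) :
    (1 + s • A).det = ∑ m ∈ Finset.range (n + 1), s ^ m * esymmMat m A := by
  have hdeg : A.charpolyRev.natDegree < n + 1 := by
    rw [← reverse_charpoly]
    have := Polynomial.reverse_natDegree_le A.charpoly
    rw [charpoly_natDegree_eq_dim, Fintype.card_fin] at this
    omega
  have heval : (1 + s • A).det = A.charpolyRev.eval (-s) := by
    rw [charpolyRev, ← Polynomial.coe_evalRingHom, RingHom.map_det]
    congr 1
    ext i j
    rcases eq_or_ne i j with rfl | hij
    · simp [mul_comm s]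
    · simp [hij, mul_comm s]
  rw [heval, Polynomial.eval_eq_sum_range' hdeg, ← reverse_charpoly]
  refine Finset.sum_congr rfl fun m hm => ?_
  rw [Polynomial.coeff_reverse, charpoly_natDegree_eq_dim, Fintype.card_fin,
    Polynomial.revAt_le (Finset.mem_range_succ_iff.1 hm), esymmMat, neg_pow]
  ring

lemma esymmMat_zero : esymmMat 0 A = 1 := by
  simpa [Finset.sum_range_succ'] using (det_one_add_smul_eq_sum_esymmMat A 0).symm

lemma newtonT_mul_self (m : ℕ) :
    newtonT m A * A = esymmMat (m + 1) A • 1 - newtonT (m + 1) A := by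
  rw [newtonT, sub_sub_cancel]

lemma newtonT_eq_sum (m : ℕ) :
    newtonT m A = ∑ j ∈ Finset.range (m + 1), ((-1) ^ j * esymmMat (m - j) A) • A ^ j := by
  induction m with
  | zero => simp [newtonT, esymmMat_zero]
  | succ m ih =>
    rw [newtonT, ih, Finset.sum_range_succ' _ (m + 1), Finset.sum_mul,
      sub_eq_neg_add, ← Finset.sum_neg_distrib]
    congr 1
    · refine Finset.sum_congr rfl fun j _ => ?_
      rw [smul_mul_assoc, ← pow_succ, ← neg_smul, pow_succ (-1 : ℝ), Nat.add_sub_add_right,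
        mul_neg_one, neg_mul]
    · simp

-- The Cayley–Hamilton theorem.
lemma newtonT_card : newtonT n A = 0 := by
  have hCH := aeval_self_charpoly A
  rw [Polynomial.aeval_eq_sum_range, charpoly_natDegree_eq_dim, Fintype.card_fin] at hCH
  rw [newtonT_eq_sum, ← smul_zero ((-1 : ℝ) ^ n), ← hCH, Finset.smul_sum]
  refine Finset.sum_congr rfl fun j hj => ?_
  have hjn : j ≤ n := Finset.mem_range_succ_iff.1 hj
  rw [smul_smul, esymmMat, ← mul_assoc, ← pow_add, Nat.add_sub_cancel' hjn, Nat.sub_sub_self hjn]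

lemma newtonT_mul_comm (m : ℕ) : newtonT m A * A = A * newtonT m A := by
  induction m with
  | zero => simp [newtonT]
  | succ m ih =>
    rw [newtonT, sub_mul, mul_sub, smul_mul_assoc, mul_smul_comm, one_mul, mul_one, ← mul_assoc A,
      ← ih]

variable {A} in
lemma newtonT_transpose (hA : Aᵀ = A) (m : ℕ) : (newtonT m A)ᵀ = newtonT m A := by
  induction m with
  | zero => simp [newtonT]
  | succ m ih =>
    rw [newtonT, transpose_sub, transpose_smul, transpose_one, transpose_mul, ih, hA,
      newtonT_mul_comm]

lemma sum_newtonT_mul_one_add_smul (s : ℝ) (p : ℕ) :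
    (∑ m ∈ Finset.range p, s ^ m • newtonT m A) * (1 + s • A)
      = (∑ m ∈ Finset.range (p + 1), s ^ m * esymmMat m A) • 1 - s ^ p • newtonT p A := by
  induction p with
  | zero => simp [newtonT, esymmMat_zero]
  | succ p ih =>
    rw [Finset.sum_range_succ, add_mul, ih, Finset.sum_range_succ _ (p + 1), mul_add, mul_one,
      mul_smul_comm, smul_mul_assoc, newtonT_mul_self]
    module

lemma adjugate_one_add_smul {s : ℝ} (hs : (1 + s • A).det ≠ 0) :
    adjugate (1 + s • A) = ∑ m ∈ Finset.range n, s ^ m • newtonT m A := by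
  have h := sum_newtonT_mul_one_add_smul A s n
  rw [newtonT_card, smul_zero, sub_zero, ← det_one_add_smul_eq_sum_esymmMat,
    ← adjugate_mul] at h
  have hunit : IsUnit (1 + s • A) := (isUnit_iff_isUnit_det _).2 hs.isUnit
  exact (hunit.mul_left_injective h).symm

lemma eventually_det_one_add_smul_ne_zero : ∀ᶠ s : ℝ in nhds 0, (1 + s • A).det ≠ 0 := by
  have hcont : Continuous fun s : ℝ => (1 + s • A).det :=
    (continuous_const.add (continuous_id.smul continuous_const)).matrix_det
  exact hcont.continuousAt.eventually_ne (by simp)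

variable {A}

-- Newton's identity, from `d/ds det (1 + s A) = tr (adj (1 + s A) A)`.
lemma trace_newtonT_mul_self {m : ℕ} (hm : m < n) :
    trace (newtonT m A * A) = (m + 1) * esymmMat (m + 1) A := by
  refine (coeff_eq_of_eventually_sum_eq (N := n)
    (a := fun m => (m + 1) * esymmMat (m + 1) A)
    (b := fun m => trace (newtonT m A * A)) ?_ hm).symm
  filter_upwards [eventually_det_one_add_smul_ne_zero A] with s hs
  have hdet : HasDerivAt (fun s : ℝ => (1 + s • A).det) (trace (adjugate (1 + s • A) * A)) s :=
    hasDerivAt_det fun i j => by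
      simpa using ((hasDerivAt_id s).mul_const (A i j)).const_add ((1 : Matrix _ _ ℝ) i j)
  simp only [det_one_add_smul_eq_sum_esymmMat] at hdet
  have hsum : HasDerivAt (fun s : ℝ => ∑ m ∈ Finset.range (n + 1), s ^ m * esymmMat m A)
      (∑ m ∈ Finset.range (n + 1), (m * s ^ (m - 1)) * esymmMat m A) s :=
    HasDerivAt.fun_sum fun m _ => (hasDerivAt_pow m s).mul_const _
  have h := hsum.unique hdet
  rw [adjugate_one_add_smul A hs, Finset.sum_range_succ', Finset.sum_mul, trace_sum] at h
  simp only [smul_mul_assoc, trace_smul, smul_eq_mul] at h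
  rw [← h]
  simp [mul_left_comm, mul_assoc]

lemma trace_newtonT {m : ℕ} (hm : m ≤ n) : trace (newtonT m A) = (n - m) * esymmMat m A := by
  cases m with
  | zero => simp [newtonT, esymmMat_zero]
  | succ m =>
    rw [newtonT, trace_sub, trace_newtonT_mul_self hm, trace_smul, trace_one, Fintype.card_fin,
      smul_eq_mul]
    push_cast
    ring

lemma esymmMat_succ {m : ℕ} (hm : m < n) :
    esymmMat (m + 1) A = (m + 1 : ℝ)⁻¹ * trace (newtonT m A * A) := by
  rw [trace_newtonT_mul_self hm, inv_mul_cancel_left₀ (by positivity)]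

section ContDiffAt

variable {E : Type*} [NormedAddCommGroup E] [NormedSpace ℝ E] {N : WithTop ℕ∞}
  {A : E → Matrix (Fin n) (Fin n) ℝ} {x : E} {m : ℕ}

lemma contDiffAt_esymmMat_and_newtonT (hA : ∀ i j, ContDiffAt ℝ N (fun y => A y i j) x)
    (hm : m ≤ n) : ContDiffAt ℝ N (fun y => esymmMat m (A y)) x ∧
      ∀ i j, ContDiffAt ℝ N (fun y => newtonT m (A y) i j) x := by
  induction m with
  | zero =>
    simpa only [esymmMat_zero, newtonT] using
      ⟨contDiffAt_const, fun _ _ => contDiffAt_const⟩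
  | succ m ih =>
    have hmul i j : ContDiffAt ℝ N (fun y => (newtonT m (A y) * A y) i j) x := by
      simp only [Matrix.mul_apply]
      exact ContDiffAt.sum fun l _ => ((ih (by omega)).2 i l).mul (hA l j)
    have hσ : ContDiffAt ℝ N (fun y => esymmMat (m + 1) (A y)) x := by
      simp only [esymmMat_succ hm]
      exact contDiffAt_const.mul (ContDiffAt.sum fun i _ => hmul i i)
    exact ⟨hσ, fun i j => (hσ.mul contDiffAt_const).sub (hmul i j)⟩

lemma contDiffAt_esymmMat (hA : ∀ i j, ContDiffAt ℝ N (fun y => A y i j) x) (hm : m ≤ n) :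
    ContDiffAt ℝ N (fun y => esymmMat m (A y)) x :=
  (contDiffAt_esymmMat_and_newtonT hA hm).1

lemma contDiffAt_newtonT (hA : ∀ i j, ContDiffAt ℝ N (fun y => A y i j) x) (hm : m ≤ n)
    (i j : Fin n) : ContDiffAt ℝ N (fun y => newtonT m (A y) i j) x :=
  (contDiffAt_esymmMat_and_newtonT hA hm).2 i j

end ContDiffAt

lemma hasDerivAt_esymmMat {A : ℝ → Matrix (Fin n) (Fin n) ℝ} {A' : Matrix (Fin n) (Fin n) ℝ}
    {t : ℝ} (hcont : ∀ i j, ContDiffAt ℝ 1 (fun t => A t i j) t)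
    (hA : ∀ i j, HasDerivAt (fun t => A t i j) (A' i j) t) {m : ℕ} (hm : m < n) :
    HasDerivAt (fun t => esymmMat (m + 1) (A t)) (trace (newtonT m (A t) * A')) t := by
  have hσ {m : ℕ} (hm : m ≤ n) := ((contDiffAt_esymmMat hcont hm).differentiableAt
    one_ne_zero).hasDerivAt
  suffices h : deriv (fun t => esymmMat (m + 1) (A t)) t =
      if m + 1 = 0 then 0 else trace (newtonT (m + 1 - 1) (A t) * A') by
    simpa [h] using hσ hm
  refine coeff_eq_of_eventually_sum_eq (N := n + 1)
    (a := fun m => deriv (fun t => esymmMat m (A t)) t)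
    (b := fun m => if m = 0 then 0 else trace (newtonT (m - 1) (A t) * A')) ?_ (by omega)
  filter_upwards [eventually_det_one_add_smul_ne_zero (A t)] with s hs
  have hdet : HasDerivAt (fun t => (1 + s • A t).det)
      (trace (adjugate (1 + s • A t) * (s • A'))) t :=
    hasDerivAt_det fun i j => by
      simpa using ((hA i j).const_mul s).const_add ((1 : Matrix _ _ ℝ) i j)
  simp only [det_one_add_smul_eq_sum_esymmMat] at hdet
  have hsum : HasDerivAt (fun t => ∑ m ∈ Finset.range (n + 1), s ^ m * esymmMat m (A t))
      (∑ m ∈ Finset.range (n + 1), s ^ m * deriv (fun t => esymmMat m (A t)) t) t :=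
    HasDerivAt.fun_sum fun m hm => (hσ (Finset.mem_range_succ_iff.1 hm)).const_mul _
  rw [hsum.unique hdet, adjugate_one_add_smul _ hs, Finset.sum_range_succ', Finset.sum_mul,
    trace_sum]
  simp [pow_succ, mul_assoc, mul_left_comm s]

lemma abs_mul_apply_le {B C : Matrix (Fin n) (Fin n) ℝ} {b c : ℝ} (hb : 0 ≤ b)
    (hB : ∀ i j, |B i j| ≤ b) (hC : ∀ i j, |C i j| ≤ c) (i j : Fin n) :
    |(B * C) i j| ≤ n * (b * c) := by
  rw [Matrix.mul_apply]
  calc |∑ l, B i l * C l j| ≤ ∑ l, |B i l * C l j| := Finset.abs_sum_le_sum_abs _ _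
    _ ≤ ∑ _l : Fin n, b * c := Finset.sum_le_sum fun l _ => by
        rw [abs_mul]
        exact mul_le_mul (hB i l) (hC l j) (abs_nonneg _) hb
    _ = n * (b * c) := by simp

lemma abs_esymmMat_and_newtonT_le {a : ℝ} (ha : 0 ≤ a) (hA : ∀ i j, |A i j| ≤ a) {m : ℕ}
    (hm : m ≤ n) : |esymmMat m A| ≤ ((n ^ 2 + n) * a) ^ m ∧
      ∀ i j, |newtonT m A i j| ≤ ((n ^ 2 + n) * a) ^ m := by
  induction m with
  | zero =>
    refine ⟨by simp [esymmMat_zero], fun i j => ?_⟩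
    rw [newtonT, one_apply]
    split_ifs <;> simp
  | succ m ih =>
    set c := (n ^ 2 + n) * a
    have hc : 0 ≤ c := by positivity
    have hmul := abs_mul_apply_le (pow_nonneg hc m) (ih (by omega)).2 hA
    have htrace : |esymmMat (m + 1) A| ≤ n * (n * (c ^ m * a)) := by
      have hinv : (m + 1 : ℝ)⁻¹ ≤ 1 := inv_le_one_of_one_le₀ (by simp)
      rw [esymmMat_succ hm, abs_mul, abs_of_nonneg (by positivity : (0 : ℝ) ≤ (m + 1 : ℝ)⁻¹)]
      calc _ ≤ 1 * ∑ i, |(newtonT m A * A) i i| := by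
            gcongr
            exact Finset.abs_sum_le_sum_abs _ _
        _ ≤ ∑ _i : Fin n, n * (c ^ m * a) := by
            rw [one_mul]
            exact Finset.sum_le_sum fun i _ => hmul i i
        _ = n * (n * (c ^ m * a)) := by simp
    have hsum : n * (n * (c ^ m * a)) + n * (c ^ m * a) = c ^ (m + 1) := by
      rw [pow_succ]
      ring
    have hle : |esymmMat (m + 1) A| ≤ c ^ (m + 1) := by
      have : 0 ≤ n * (c ^ m * a) := by positivity
      linarith
    refine ⟨hle, fun i j => ?_⟩
    rw [newtonT, Matrix.sub_apply, Matrix.smul_apply, one_apply, smul_eq_mul, mul_ite, mul_one,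
      mul_zero]
    refine (abs_sub _ _).trans (le_trans (add_le_add ?_ (hmul i j)) hsum.le)
    split_ifs
    · exact htrace
    · simpa using (abs_nonneg _).trans htrace

end NewtonTensors

/-! ### Divergence of Newton tensors -/

/-- The row-wise divergence `j ↦ ∑ᵢ ∂ᵢ Tⁱʲ` of a matrix field. -/
noncomputable def matDiv {n : ℕ} (T : (Fin n → ℝ) → Matrix (Fin n) (Fin n) ℝ) (x : Fin n → ℝ) :
    Fin n → ℝ :=
  fun j => ∑ i, pd i (fun y => T y i j) x

section Divergence

variable {n : ℕ} {x : Fin n → ℝ}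

lemma contDiffAt_pd {m N : WithTop ℕ∞} {w : (Fin n → ℝ) → ℝ} (hw : ContDiffAt ℝ N w x)
    (hm : m + 1 ≤ N) (i : Fin n) : ContDiffAt ℝ m (pd i w) x :=
  (hw.fderiv_right hm).clm_apply contDiffAt_const

lemma pd_comm {w : (Fin n → ℝ) → ℝ} (hw : ContDiffAt ℝ 2 w x) (i j : Fin n) :
    pd i (pd j w) x = pd j (pd i w) x := by
  have hd : DifferentiableAt ℝ (fderiv ℝ w) x :=
    (hw.fderiv_right (m := 1) (by norm_num)).differentiableAt one_ne_zero
  have h_snd (a b : Fin n) :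
      pd a (pd b w) x = fderiv ℝ (fderiv ℝ w) x (Pi.single a 1) (Pi.single b 1) := by
    rw [pd, show pd b w = fun y => fderiv ℝ w y (Pi.single b 1) from rfl,
      fderiv_clm_apply hd (differentiableAt_const _)]
    simp
  rw [h_snd, h_snd]
  exact (hw.isSymmSndFDerivAt (by simp)).eq _ _

lemma pd_congr {w v : (Fin n → ℝ) → ℝ} (h : w =ᶠ[nhds x] v) (i : Fin n) : pd i w x = pd i v x := by
  rw [pd, pd, h.fderiv_eq]

lemma pd_sum {ι : Type*} {s : Finset ι} {f : ι → (Fin n → ℝ) → ℝ}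
    (hf : ∀ a ∈ s, DifferentiableAt ℝ (f a) x) (i : Fin n) :
    pd i (fun y => ∑ a ∈ s, f a y) x = ∑ a ∈ s, pd i (f a) x := by
  simp [pd, fderiv_fun_sum hf]

lemma pd_mul {f g : (Fin n → ℝ) → ℝ} (hf : DifferentiableAt ℝ f x) (hg : DifferentiableAt ℝ g x)
    (i : Fin n) : pd i (fun y => f y * g y) x = pd i f x * g x + f x * pd i g x := by
  simp only [pd, fderiv_fun_mul hf hg, _root_.add_apply, _root_.smul_apply, smul_eq_mul]
  ring

lemma pd_mul_const {f : (Fin n → ℝ) → ℝ} (hf : DifferentiableAt ℝ f x) (c : ℝ) (i : Fin n) :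
    pd i (fun y => f y * c) x = pd i f x * c := by
  simpa [pd, fderiv_mul_const hf] using mul_comm _ _

lemma pd_sub {f g : (Fin n → ℝ) → ℝ} (hf : DifferentiableAt ℝ f x) (hg : DifferentiableAt ℝ g x)
    (i : Fin n) : pd i (fun y => f y - g y) x = pd i f x - pd i g x := by
  simp [pd, fderiv_fun_sub hf hg]

lemma hasDerivAt_pd {w : (Fin n → ℝ) → ℝ} (hw : DifferentiableAt ℝ w x) (i : Fin n) :
    HasDerivAt (fun t : ℝ => w (x + t • Pi.single i 1)) (pd i w x) 0 :=
  hw.hasFDerivAt.hasLineDerivAt (Pi.single i 1)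

variable {A : (Fin n → ℝ) → Matrix (Fin n) (Fin n) ℝ} {m : ℕ}

lemma pd_esymmMat (hA : ∀ i j, ContDiffAt ℝ 1 (fun y => A y i j) x) (hm : m < n) (j : Fin n) :
    pd j (fun y => esymmMat (m + 1) (A y)) x
      = ∑ i, ∑ l, newtonT m (A x) i l * pd j (fun y => A y l i) x := by
  have hline := hasDerivAt_pd ((contDiffAt_esymmMat hA hm).differentiableAt one_ne_zero) j
  have htrace := hasDerivAt_esymmMat (A := fun t : ℝ => A (x + t • Pi.single j 1))
    (A' := Matrix.of fun a b => pd j (fun y => A y a b) x) (t := 0)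
    (fun a b => ContDiffAt.comp (g := fun y => A y a b) (0 : ℝ) (by simpa using hA a b)
      (by fun_prop))
    (fun a b => hasDerivAt_pd ((hA a b).differentiableAt one_ne_zero) j) hm
  rw [hline.unique htrace]
  simp [trace, Matrix.mul_apply]

lemma matDiv_mul {S T : (Fin n → ℝ) → Matrix (Fin n) (Fin n) ℝ}
    (hS : ∀ i j, DifferentiableAt ℝ (fun y => S y i j) x)
    (hT : ∀ i j, DifferentiableAt ℝ (fun y => T y i j) x) (j : Fin n) :
    matDiv (fun y => S y * T y) x j
      = (matDiv S x ᵥ* T x) j + ∑ i, ∑ l, S x i l * pd i (fun y => T y l j) x := by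
  simp only [matDiv, Matrix.mul_apply, vecMul, dotProduct, Finset.sum_mul]
  rw [Finset.sum_comm, ← Finset.sum_add_distrib]
  refine Finset.sum_congr rfl fun i _ => ?_
  rw [pd_sum fun l _ => (hS i l).fun_mul (hT l j), ← Finset.sum_add_distrib]
  exact Finset.sum_congr rfl fun l _ => pd_mul (hS i l) (hT l j) i

lemma matDiv_newtonT_succ (hA : ∀ i j, ContDiffAt ℝ 1 (fun y => A y i j) x) (hm : m < n)
    (j : Fin n) :
    matDiv (fun y => newtonT (m + 1) (A y)) x j
      = ∑ i, ∑ l, newtonT m (A x) i l *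
          (pd j (fun y => A y l i) x - pd i (fun y => A y l j) x)
        - (matDiv (fun y => newtonT m (A y)) x ᵥ* A x) j := by
  have hAd i j : DifferentiableAt ℝ (fun y => A y i j) x := (hA i j).differentiableAt one_ne_zero
  have hTd i j : DifferentiableAt ℝ (fun y => newtonT m (A y) i j) x :=
    (contDiffAt_newtonT hA hm.le i j).differentiableAt one_ne_zero
  have hσd : DifferentiableAt ℝ (fun y => esymmMat (m + 1) (A y)) x :=
    (contDiffAt_esymmMat hA hm).differentiableAt one_ne_zero
  have hmul i : DifferentiableAt ℝ (fun y => (newtonT m (A y) * A y) i j) x := by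
    simp only [Matrix.mul_apply]
    exact DifferentiableAt.fun_sum fun l _ => (hTd i l).fun_mul (hAd l j)
  have hsplit : matDiv (fun y => newtonT (m + 1) (A y)) x j
      = pd j (fun y => esymmMat (m + 1) (A y)) x - matDiv (fun y => newtonT m (A y) * A y) x j := by
    simp only [matDiv, newtonT, Matrix.sub_apply, Matrix.smul_apply, smul_eq_mul]
    rw [Finset.sum_congr rfl fun i _ => pd_sub (hσd.mul_const _) (hmul i) i,
      Finset.sum_sub_distrib]
    simp only [pd_mul_const hσd]
    simp [Matrix.one_apply]
  rw [hsplit, matDiv_mul hTd hAd, pd_esymmMat hA hm]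
  simp only [mul_sub, Finset.sum_sub_distrib]
  ring

-- `hcodazzi` is the Codazzi equation satisfied by `∇²u - G I` with `φ = ∇G`.
lemma matDiv_newtonT_of_codazzi (hA : ∀ i j, ContDiffAt ℝ 1 (fun y => A y i j) x)
    {φ : Fin n → ℝ}
    (hcodazzi : ∀ i j l, pd j (fun y => A y l i) x - pd i (fun y => A y l j) x
      = φ i * (1 : Matrix _ _ ℝ) l j - φ j * (1 : Matrix _ _ ℝ) l i) (hm : m < n) :
    matDiv (fun y => newtonT (m + 1) (A y)) x = -(n - (m + 1) : ℝ) • (φ ᵥ* newtonT m (A x)) := by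
  have hcontract {m : ℕ} (hm : m < n) : matDiv (fun y => newtonT (m + 1) (A y)) x
      = φ ᵥ* newtonT m (A x) - ((n - m) * esymmMat m (A x)) • φ
        - matDiv (fun y => newtonT m (A y)) x ᵥ* A x := by
    funext j
    rw [matDiv_newtonT_succ hA hm, Pi.sub_apply, Pi.sub_apply, ← trace_newtonT hm.le]
    simp [hcodazzi, mul_sub, Matrix.one_apply, vecMul, dotProduct, trace,
      Finset.mul_sum, mul_comm]
  induction m with
  | zero =>
    have hzero : matDiv (fun y => newtonT 0 (A y)) x = 0 := by
      funext j
      simp [matDiv, newtonT, pd]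
    rw [hcontract hm, hzero, zero_vecMul, esymmMat_zero, newtonT, vecMul_one]
    module
  | succ m ih =>
    rw [hcontract hm, ih (by omega), smul_vecMul, vecMul_vecMul, newtonT_mul_self, vecMul_sub,
      vecMul_smul, vecMul_one]
    push_cast
    module

lemma codazzi_hess_sub_smul_one {u φ : (Fin n → ℝ) → ℝ} (hu : ContDiffAt ℝ 3 u x)
    (hφ : DifferentiableAt ℝ φ x) (i j l : Fin n) :
    pd j (fun y => (hess u y - φ y • (1 : Matrix (Fin n) (Fin n) ℝ)) l i) x
        - pd i (fun y => (hess u y - φ y • (1 : Matrix (Fin n) (Fin n) ℝ)) l j) x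
      = pd i φ x * (1 : Matrix _ _ ℝ) l j - pd j φ x * (1 : Matrix _ _ ℝ) l i := by
  have h_pd a : ContDiffAt ℝ 2 (pd a u) x := contDiffAt_pd hu (by norm_num) a
  have h_entry a b c : pd a (fun y => (hess u y - φ y • (1 : Matrix (Fin n) (Fin n) ℝ)) b c) x
      = pd a (pd b (pd c u)) x - pd a φ x * (1 : Matrix _ _ ℝ) b c := by
    have hd : DifferentiableAt ℝ (pd b (pd c u)) x :=
      (contDiffAt_pd (h_pd c) (m := 1) (by norm_num) b).differentiableAt one_ne_zero
    exact (pd_sub hd (hφ.mul_const _) a).trans (by rw [pd_mul_const hφ])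
  have h_third : pd j (pd l (pd i u)) x = pd i (pd l (pd j u)) x := by
    have hev : pd j (pd i u) =ᶠ[nhds x] pd i (pd j u) := by
      filter_upwards [(hu.of_le (by norm_num : (2 : WithTop ℕ∞) ≤ 3)).eventually (by simp)]
        with y hy using pd_comm hy j i
    rw [pd_comm (h_pd i) j l, pd_congr hev, pd_comm (h_pd j) l i]
  rw [h_entry, h_entry, h_third]
  ring

end Divergence

/-! ### Integration by parts against Lipschitz coefficients -/

section PosPart

variable {q : ℝ}

lemma hasDerivAt_posPart_rpow (hq : 1 < q) (t : ℝ) :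
    HasDerivAt (fun t : ℝ => max t 0 ^ q) (q * max t 0 ^ (q - 1)) t := by
  rcases lt_trichotomy t 0 with ht | rfl | ht
  · have h_zero : (fun t : ℝ => max t 0 ^ q) =ᶠ[nhds t] fun _ => 0 := by
      filter_upwards [gt_mem_nhds ht] with s hs
      rw [max_eq_right hs.le, Real.zero_rpow (by linarith)]
    simpa [max_eq_right ht.le, Real.zero_rpow (sub_pos.2 hq).ne']
      using (hasDerivAt_const t (0 : ℝ)).congr_of_eventuallyEq h_zero
  · have h_abs := hasDerivAt_abs_rpow 0 hq
    rw [hasDerivAt_iff_isLittleO] at h_abs ⊢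
    have hq_sub : q - 1 ≠ 0 := by linarith
    have hq_ne : q ≠ 0 := by linarith
    simp only [max_self, abs_zero, Real.zero_rpow hq_sub, Real.zero_rpow hq_ne, mul_zero,
      smul_zero, sub_zero] at h_abs ⊢
    refine (Asymptotics.isBigO_of_le _ fun s => ?_).trans_isLittleO h_abs
    rw [Real.norm_of_nonneg (by positivity), Real.norm_of_nonneg (by positivity)]
    gcongr
    exact max_le (le_abs_self s) (abs_nonneg s)
  · have h_pow : (fun t : ℝ => max t 0 ^ q) =ᶠ[nhds t] fun s => s ^ q := by
      filter_upwards [lt_mem_nhds ht] with s hs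
      rw [max_eq_left hs.le]
    rw [max_eq_left ht.le]
    exact (Real.hasDerivAt_rpow_const (Or.inl ht.ne')).congr_of_eventuallyEq h_pow

lemma continuous_posPart_rpow (hq : 0 ≤ q) : Continuous fun t : ℝ => max t 0 ^ q :=
  (continuous_id.max continuous_const).rpow_const fun _ => Or.inr hq

lemma contDiff_posPart_rpow (hq : 1 < q) : ContDiff ℝ 1 fun t : ℝ => max t 0 ^ q := by
  refine contDiff_one_iff_deriv.2
    ⟨fun t => (hasDerivAt_posPart_rpow hq t).differentiableAt, ?_⟩
  rw [funext fun t => (hasDerivAt_posPart_rpow hq t).deriv]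
  exact continuous_const.mul (continuous_posPart_rpow (by linarith))

lemma pd_posPart_rpow {n : ℕ} {V : (Fin n → ℝ) → ℝ} {x : Fin n → ℝ} (hq : 1 < q)
    (hV : DifferentiableAt ℝ V x) (j : Fin n) :
    pd j (fun y => max (V y) 0 ^ q) x = q * max (V x) 0 ^ (q - 1) * pd j V x := by
  have h_chain : HasFDerivAt (fun y => max (V y) 0 ^ q) _ x :=
    (hasDerivAt_posPart_rpow hq (V x)).comp_hasFDerivAt x hV.hasFDerivAt
  rw [pd, h_chain.fderiv]
  rfl

end PosPart

/-- `η` is a `C¹` cutoff function, `0 ≤ η ≤ 1`, vanishing outside `ball x₀ r`, whose partial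
derivatives are bounded by `c`. -/
structure IsCutoff {n : ℕ} (η : (Fin n → ℝ) → ℝ) (x₀ : Fin n → ℝ) (r c : ℝ) : Prop where
  contDiff : ContDiff ℝ 1 η
  eq_zero : ∀ x ∉ ball x₀ r, η x = 0
  nonneg : ∀ x, 0 ≤ η x
  le_one : ∀ x, η x ≤ 1
  abs_pd_le : ∀ x j, |pd j η x| ≤ c

/-- `b` is a Lipschitz coefficient on the ball `ball x₀ r`: it is bounded by `K`, and its
directional derivatives, which exist almost everywhere only, are bounded by `K w` for a weight
function `w`. -/
structure IsLipschitzCoeff {n : ℕ} (b w : (Fin n → ℝ) → ℝ) (x₀ : Fin n → ℝ) (r K : ℝ) : Prop where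
  exists_lipschitz : ∃ L, LipschitzOnWith L b (closedBall x₀ r)
  abs_le : ∀ x ∈ ball x₀ r, |b x| ≤ K
  abs_lineDeriv_le : ∀ x ∈ ball x₀ r, ∀ j, |lineDeriv ℝ b x (Pi.single j 1)| ≤ K * w x

section IntegrationByParts

variable {n : ℕ} {x₀ : Fin n → ℝ} {r : ℝ}

lemma integrableOn_ball {f : (Fin n → ℝ) → ℝ}
    (hf : ContinuousOn f (closedBall x₀ r)) : IntegrableOn f (ball x₀ r) :=
  (hf.integrableOn_compact (isCompact_closedBall x₀ r)).mono_set ball_subset_closedBall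

lemma continuousOn_of_contDiffAt {E F : Type*} [NormedAddCommGroup E] [NormedSpace ℝ E]
    [NormedAddCommGroup F] [NormedSpace ℝ F] {s : Set E} {f : E → F} {N : WithTop ℕ∞}
    (hf : ∀ x ∈ s, ContDiffAt ℝ N f x) : ContinuousOn f s :=
  fun x hx => (hf x hx).continuousAt.continuousWithinAt

lemma continuousOn_pd {s : Set (Fin n → ℝ)} {f : (Fin n → ℝ) → ℝ}
    (hf : ∀ x ∈ s, ContDiffAt ℝ 1 f x) (j : Fin n) : ContinuousOn (pd j f) s :=
  continuousOn_of_contDiffAt fun x hx => contDiffAt_pd (m := 0) (hf x hx) (by simp) j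

lemma eventually_eq_zero_of_notMem_closedBall {g : (Fin n → ℝ) → ℝ}
    (hg₀ : ∀ x ∉ ball x₀ r, g x = 0) {x : Fin n → ℝ} (hx : x ∉ closedBall x₀ r) :
    g =ᶠ[nhds x] fun _ => 0 := by
  filter_upwards [isClosed_closedBall.isOpen_compl.mem_nhds hx] with y hy
  exact hg₀ y fun hy' => hy (ball_subset_closedBall hy')

lemma hasCompactSupport_of_eq_zero {g : (Fin n → ℝ) → ℝ} (hg₀ : ∀ x ∉ ball x₀ r, g x = 0) :
    HasCompactSupport g :=
  HasCompactSupport.of_support_subset_isCompact (isCompact_closedBall x₀ r) fun x hx =>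
    ball_subset_closedBall (not_imp_comm.1 (hg₀ x) hx)

lemma setIntegral_ball_eq_integral (hr : 0 < r) {f : (Fin n → ℝ) → ℝ}
    (hf : ∀ x ∉ closedBall x₀ r, f x = 0) : ∫ x in ball x₀ r, f x = ∫ x, f x := by
  refine setIntegral_eq_integral_of_ae_compl_eq_zero ?_
  filter_upwards [compl_mem_ae_iff.2 (Measure.addHaar_sphere_of_ne_zero volume x₀ hr.ne')]
    with x h_sphere h_ball
  exact hf x fun hx => h_sphere
    (le_antisymm (mem_closedBall.1 hx) (not_lt.1 fun hlt => h_ball hlt))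

lemma setIntegral_mul_pd_eq_neg (hr : 0 < r) {g b : (Fin n → ℝ) → ℝ} (hg : ContDiff ℝ 1 g)
    (hg₀ : ∀ x ∉ ball x₀ r, g x = 0) {L : NNReal} (hb : LipschitzOnWith L b (closedBall x₀ r))
    (j : Fin n) :
    ∫ x in ball x₀ r, b x * pd j g x
      = -∫ x in ball x₀ r, lineDeriv ℝ b x (Pi.single j 1) * g x := by
  obtain ⟨B, hB, hBb⟩ := hb.extend_real
  have h_supp := hasCompactSupport_of_eq_zero hg₀
  obtain ⟨C, hC⟩ := hg.lipschitzWith_of_hasCompactSupport h_supp one_ne_zero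
  have h_parts := hB.integral_lineDeriv_mul_eq (μ := volume) hC h_supp (Pi.single j 1)
  have h_lineDeriv x : lineDeriv ℝ g x (-Pi.single j 1) = -pd j g x := by
    rw [((hg.differentiable one_ne_zero) x).lineDeriv_eq_fderiv, map_neg, pd]
  have h_pd_zero x (hx : x ∉ closedBall x₀ r) : lineDeriv ℝ g x (-Pi.single j 1) * B x = 0 := by
    rw [h_lineDeriv, pd, (eventually_eq_zero_of_notMem_closedBall hg₀ hx).fderiv_eq]
    simp
  have h_zero x (hx : x ∉ closedBall x₀ r) : lineDeriv ℝ B x (Pi.single j 1) * g x = 0 := by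
    rw [hg₀ x fun h => hx (ball_subset_closedBall h), mul_zero]
  rw [← setIntegral_ball_eq_integral hr h_pd_zero, ← setIntegral_ball_eq_integral hr h_zero]
    at h_parts
  have h_left : ∫ x in ball x₀ r, b x * pd j g x
      = -∫ x in ball x₀ r, lineDeriv ℝ g x (-Pi.single j 1) * B x := by
    rw [← integral_neg]
    refine setIntegral_congr_fun measurableSet_ball fun x hx => ?_
    simp only [h_lineDeriv, hBb (ball_subset_closedBall hx)]
    ring
  rw [h_left, ← h_parts]
  congr 1
  refine setIntegral_congr_fun measurableSet_ball fun x hx => ?_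
  have h_eq : B =ᶠ[nhds x] b := by
    filter_upwards [isOpen_ball.mem_nhds hx] with y hy
      using (hBb (ball_subset_closedBall hy)).symm
  simp only [h_eq.lineDeriv_eq]

lemma abs_setIntegral_ball_le {f D : (Fin n → ℝ) → ℝ} (hD : ContinuousOn D (closedBall x₀ r))
    (hf : ∀ x ∈ ball x₀ r, |f x| ≤ D x) : |∫ x in ball x₀ r, f x| ≤ ∫ x in ball x₀ r, D x :=
  norm_integral_le_of_norm_le (f := f) (integrableOn_ball hD)
    ((ae_restrict_iff' measurableSet_ball).2 (Filter.Eventually.of_forall hf))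

variable {η V w : (Fin n → ℝ) → ℝ} {c q : ℝ} {Y : (Fin n → ℝ) → Fin n → ℝ}

lemma continuousOn_posPart_rpow_mul_pow (hq : 0 ≤ q)
    (hV : ContinuousOn V (closedBall x₀ r)) (hw : ContinuousOn w (closedBall x₀ r)) (C : ℝ)
    (p : ℕ) :
    ContinuousOn (fun x => C * (max (V x) 0 ^ q * w x ^ p)) (closedBall x₀ r) :=
  continuousOn_const.mul (((continuous_posPart_rpow hq).comp_continuousOn hV).mul (hw.pow _))

namespace IsCutoff

lemma contDiff_mul (hη : IsCutoff η x₀ r c) {f : (Fin n → ℝ) → ℝ}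
    (hf : ∀ x ∈ closedBall x₀ r, ContDiffAt ℝ 1 f x) : ContDiff ℝ 1 fun x => η x * f x := by
  refine contDiff_iff_contDiffAt.2 fun x => ?_
  by_cases hx : x ∈ closedBall x₀ r
  · exact hη.contDiff.contDiffAt.mul (hf x hx)
  · refine contDiffAt_const (c := (0 : ℝ)).congr_of_eventuallyEq ?_
    filter_upwards [eventually_eq_zero_of_notMem_closedBall hη.eq_zero hx] with y hy
    rw [hy, zero_mul]

lemma contDiff_mul_posPart_rpow_mul (hη : IsCutoff η x₀ r c) (hq : 1 < q)
    (hV : ∀ x ∈ closedBall x₀ r, ContDiffAt ℝ 1 V x) {f : (Fin n → ℝ) → ℝ}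
    (hf : ∀ x ∈ closedBall x₀ r, ContDiffAt ℝ 1 f x) :
    ContDiff ℝ 1 fun x => η x * (max (V x) 0 ^ q * f x) :=
  hη.contDiff_mul fun x hx =>
    ((contDiff_posPart_rpow hq).contDiffAt.comp x (hV x hx)).mul (hf x hx)

lemma sum_pd_mul (hη : IsCutoff η x₀ r c) (hq : 1 < q) {x : Fin n → ℝ} (hV : ContDiffAt ℝ 1 V x)
    (hY : ∀ j, ContDiffAt ℝ 1 (fun y => Y y j) x) :
    ∑ j, pd j (fun y => η y * (max (V y) 0 ^ q * Y y j)) x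
      = max (V x) 0 ^ q * (grad η x ⬝ᵥ Y x + η x * ∑ j, pd j (fun y => Y y j) x)
        + q * (η x * max (V x) 0 ^ (q - 1) * (Y x ⬝ᵥ grad V x)) := by
  have h_pow : DifferentiableAt ℝ (fun y => max (V y) 0 ^ q) x :=
    ((contDiff_posPart_rpow hq).contDiffAt.comp x hV).differentiableAt one_ne_zero
  simp only [dotProduct, grad, Finset.mul_sum, ← Finset.sum_add_distrib]
  refine Finset.sum_congr rfl fun j _ => ?_
  have hYj := (hY j).differentiableAt one_ne_zero
  rw [pd_mul (hη.contDiff.differentiable one_ne_zero x) (h_pow.fun_mul hYj), pd_mul h_pow hYj,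
    pd_posPart_rpow hq (hV.differentiableAt one_ne_zero)]
  ring

lemma abs_flux_le (hη : IsCutoff η x₀ r c) {κ : ℝ} {p : ℕ} {x : Fin n → ℝ} (hx : 1 ≤ w x)
    (hYκ : ∀ j, |Y x j| ≤ κ * w x ^ p)
    (hdiv : |∑ j, pd j (fun y => Y y j) x| ≤ κ * w x ^ (p + 1)) :
    |grad η x ⬝ᵥ Y x + η x * ∑ j, pd j (fun y => Y y j) x|
      ≤ (n * c + 1) * (κ * w x ^ (p + 1)) := by
  have h_mono j : |Y x j| ≤ κ * w x ^ (p + 1) := by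
    refine (hYκ j).trans (mul_le_mul_of_nonneg_left (pow_le_pow_right₀ hx p.le_succ) ?_)
    exact nonneg_of_mul_nonneg_left ((abs_nonneg _).trans (hYκ j)) (by positivity)
  have h_grad : |grad η x ⬝ᵥ Y x| ≤ ∑ _j : Fin n, c * (κ * w x ^ (p + 1)) :=
    (Finset.abs_sum_le_sum_abs _ _).trans <| Finset.sum_le_sum fun j _ =>
      (abs_mul _ _).trans_le (mul_le_mul (hη.abs_pd_le x j) (h_mono j) (abs_nonneg _)
        ((abs_nonneg _).trans (hη.abs_pd_le x j)))
  have h_div : |η x * ∑ j, pd j (fun y => Y y j) x| ≤ 1 * (κ * w x ^ (p + 1)) := by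
    rw [abs_mul, abs_of_nonneg (hη.nonneg x)]
    exact mul_le_mul (hη.le_one x) hdiv (abs_nonneg _) zero_le_one
  calc _ ≤ _ := (abs_add_le _ _).trans (add_le_add h_grad h_div)
    _ = _ := by simp; ring

lemma mul_integral_eq (hη : IsCutoff η x₀ r c) (hq : 1 < q)
    (hV : ∀ x ∈ closedBall x₀ r, ContDiffAt ℝ 1 V x)
    (hY : ∀ x ∈ closedBall x₀ r, ∀ j, ContDiffAt ℝ 1 (fun y => Y y j) x)
    {b : (Fin n → ℝ) → ℝ} (hb : ContinuousOn b (closedBall x₀ r)) :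
    q * ∫ x in ball x₀ r, η x * max (V x) 0 ^ (q - 1) * (b x * (Y x ⬝ᵥ grad V x))
      = (∑ j, ∫ x in ball x₀ r, b x * pd j (fun y => η y * (max (V y) 0 ^ q * Y y j)) x)
        - ∫ x in ball x₀ r, b x * (max (V x) 0 ^ q *
            (grad η x ⬝ᵥ Y x + η x * ∑ j, pd j (fun y => Y y j) x)) := by
  have h_posPart : ContinuousOn (fun x => max (V x) 0 ^ q) (closedBall x₀ r) :=
    (continuous_posPart_rpow (by linarith)).comp_continuousOn (continuousOn_of_contDiffAt hV)
  have h_test j := hη.contDiff_mul_posPart_rpow_mul hq hV fun x hx => hY x hx j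
  have h_test_int j : IntegrableOn
      (fun x => b x * pd j (fun y => η y * (max (V y) 0 ^ q * Y y j)) x) (ball x₀ r) :=
    integrableOn_ball (hb.mul (continuousOn_pd (fun x _ => (h_test j).contDiffAt) j))
  have h_flux : ContinuousOn
      (fun x => grad η x ⬝ᵥ Y x + η x * ∑ j, pd j (fun y => Y y j) x) (closedBall x₀ r) :=
    (continuousOn_finsetSum _ fun j _ =>
      (continuousOn_pd (fun x _ => hη.contDiff.contDiffAt) j).mul
        (continuousOn_of_contDiffAt fun x hx => hY x hx j)).add
    (hη.contDiff.continuous.continuousOn.mul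
      (continuousOn_finsetSum _ fun j _ => continuousOn_pd (fun x hx => hY x hx j) j))
  rw [← integral_const_mul, ← integral_finsetSum _ fun j _ => h_test_int j,
    ← integral_sub (integrable_finsetSum _ fun j _ => h_test_int j)
      (integrableOn_ball (hb.fun_mul (h_posPart.fun_mul h_flux)))]
  refine setIntegral_congr_fun measurableSet_ball fun x hx => ?_
  have hx' := ball_subset_closedBall hx
  rw [← Finset.mul_sum, hη.sum_pd_mul hq (hV x hx') (hY x hx')]
  ring

lemma abs_integral_lipschitzCoeff_mul_pd_le (hη : IsCutoff η x₀ r c) (hr : 0 < r) (hq : 1 < q)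
    (hV : ∀ x ∈ closedBall x₀ r, ContDiffAt ℝ 1 V x) {f : (Fin n → ℝ) → ℝ}
    (hf : ∀ x ∈ closedBall x₀ r, ContDiffAt ℝ 1 f x) (hw : ContinuousOn w (closedBall x₀ r))
    {b : (Fin n → ℝ) → ℝ} {K κ : ℝ} {p : ℕ} (hb : IsLipschitzCoeff b w x₀ r K)
    (hfκ : ∀ x ∈ ball x₀ r, |f x| ≤ κ * w x ^ p) (j : Fin n) :
    |∫ x in ball x₀ r, b x * pd j (fun y => η y * (max (V y) 0 ^ q * f y)) x|
      ≤ κ * K * ∫ x in ball x₀ r, max (V x) 0 ^ q * w x ^ (p + 1) := by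
  obtain ⟨L, hL⟩ := hb.exists_lipschitz
  rw [setIntegral_mul_pd_eq_neg hr (hη.contDiff_mul_posPart_rpow_mul hq hV hf)
    (fun x hx => by rw [hη.eq_zero x hx, zero_mul]) hL j, abs_neg, ← integral_const_mul]
  refine abs_setIntegral_ball_le (continuousOn_posPart_rpow_mul_pow (by linarith)
    (continuousOn_of_contDiffAt hV) hw _ _) fun x hx => ?_
  have hη0 := hη.nonneg x
  have h_lineDeriv := hb.abs_lineDeriv_le x hx j
  have h_nonneg := (abs_nonneg _).trans h_lineDeriv
  calc _ = |lineDeriv ℝ b x (Pi.single j 1)| * (η x * (max (V x) 0 ^ q * |f x|)) := by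
        rw [abs_mul, abs_mul, abs_mul, abs_of_nonneg hη0,
          abs_of_nonneg (a := max (V x) 0 ^ q) (by positivity)]
    _ ≤ (K * w x) * (1 * (max (V x) 0 ^ q * (κ * w x ^ p))) := by
        gcongr
        exacts [hη.le_one x, hfκ x hx]
    _ = _ := by rw [pow_succ]; ring

-- Only `b` fails to be differentiable, so all other factors are put into the test field.
lemma abs_integral_lipschitzCoeff_mul_le (hη : IsCutoff η x₀ r c) (hr : 0 < r) (hq : 1 < q)
    (hV : ∀ x ∈ closedBall x₀ r, ContDiffAt ℝ 1 V x)
    (hY : ∀ x ∈ closedBall x₀ r, ∀ j, ContDiffAt ℝ 1 (fun y => Y y j) x)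
    (hw : ContinuousOn w (closedBall x₀ r)) (hw1 : ∀ x ∈ ball x₀ r, 1 ≤ w x)
    {b : (Fin n → ℝ) → ℝ} {K κ : ℝ} {p : ℕ} (hb : IsLipschitzCoeff b w x₀ r K)
    (hYκ : ∀ x ∈ ball x₀ r, ∀ j, |Y x j| ≤ κ * w x ^ p)
    (hdiv : ∀ x ∈ ball x₀ r, |∑ j, pd j (fun y => Y y j) x| ≤ κ * w x ^ (p + 1)) :
    |∫ x in ball x₀ r, η x * max (V x) 0 ^ (q - 1) * (b x * (Y x ⬝ᵥ grad V x))|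
      ≤ κ * K * (n * (1 + c) + 1) * ∫ x in ball x₀ r, max (V x) 0 ^ q * w x ^ (p + 1) := by
  obtain ⟨L, hL⟩ := hb.exists_lipschitz
  set J := ∫ x in ball x₀ r, max (V x) 0 ^ q * w x ^ (p + 1) with hJ
  have h_test j := hη.abs_integral_lipschitzCoeff_mul_pd_le hr hq hV (fun x hx => hY x hx j) hw hb
    (fun x hx => hYκ x hx j) j
  have h_flux : |∫ x in ball x₀ r, b x * (max (V x) 0 ^ q *
      (grad η x ⬝ᵥ Y x + η x * ∑ j, pd j (fun y => Y y j) x))| ≤ κ * K * (n * c + 1) * J := by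
    rw [hJ, ← integral_const_mul]
    refine abs_setIntegral_ball_le (continuousOn_posPart_rpow_mul_pow (by linarith)
      (continuousOn_of_contDiffAt hV) hw _ _) fun x hx => ?_
    have h_le := hη.abs_flux_le (hw1 x hx) (hYκ x hx) (hdiv x hx)
    rw [abs_mul, abs_mul, abs_of_nonneg (a := max (V x) 0 ^ q) (by positivity)]
    calc _ ≤ K * (max (V x) 0 ^ q * ((n * c + 1) * (κ * w x ^ (p + 1)))) := by
          have := (abs_nonneg _).trans (hb.abs_le x hx)
          gcongr
          exact hb.abs_le x hx
      _ = _ := by ring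
  have h_mul : q * |∫ x in ball x₀ r, η x * max (V x) 0 ^ (q - 1) * (b x * (Y x ⬝ᵥ grad V x))|
      ≤ κ * K * (n * (1 + c) + 1) * J := by
    rw [← abs_of_pos (a := q) (by linarith), ← abs_mul, abs_of_pos (a := q) (by linarith),
      hη.mul_integral_eq hq hV hY hL.continuousOn]
    calc _ ≤ (∑ _j : Fin n, κ * K * J) + κ * K * (n * c + 1) * J :=
          (abs_sub _ _).trans <| add_le_add ((Finset.abs_sum_le_sum_abs _ _).trans
            (Finset.sum_le_sum fun j _ => h_test j)) h_flux
      _ = _ := by simp; ring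
  exact (le_mul_of_one_le_left (abs_nonneg _) hq.le).trans h_mul

lemma abs_integral_dotProduct_grad_vecMul_le (hη : IsCutoff η x₀ r c) (hr : 0 < r) (hq : 1 < q)
    (hV : ∀ x ∈ closedBall x₀ r, ContDiffAt ℝ 1 V x)
    {T : (Fin n → ℝ) → Matrix (Fin n) (Fin n) ℝ}
    (hT : ∀ x ∈ closedBall x₀ r, ∀ i j, ContDiffAt ℝ 1 (fun y => T y i j) x)
    (hw : ContinuousOn w (closedBall x₀ r)) (hw1 : ∀ x ∈ ball x₀ r, 1 ≤ w x)
    {β : (Fin n → ℝ) → Fin n → ℝ} {K κ : ℝ} {p : ℕ}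
    (hβ : ∀ i, IsLipschitzCoeff (fun x => β x i) w x₀ r K)
    (hTκ : ∀ x ∈ ball x₀ r, ∀ i j, |T x i j| ≤ κ * w x ^ p)
    (hdiv : ∀ x ∈ ball x₀ r, ∀ i, |matDiv T x i| ≤ κ * w x ^ (p + 1)) :
    |∫ x in ball x₀ r, η x * max (V x) 0 ^ (q - 1) * (β x ⬝ᵥ (grad V x ᵥ* T x))|
      ≤ n * (κ * K * (n * (1 + c) + 1)) *
        ∫ x in ball x₀ r, max (V x) 0 ^ q * w x ^ (p + 1) := by
  have h_int i : IntegrableOn (fun x => η x * max (V x) 0 ^ (q - 1) *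
      (β x i * ((fun j => T x j i) ⬝ᵥ grad V x))) (ball x₀ r) := by
    obtain ⟨L, hL⟩ := (hβ i).exists_lipschitz
    refine integrableOn_ball ((hη.contDiff.continuous.continuousOn.mul
      ((continuous_posPart_rpow (by linarith)).comp_continuousOn
        (continuousOn_of_contDiffAt hV))).mul (hL.continuousOn.mul
      (continuousOn_finsetSum _ fun j _ => ?_)))
    exact (continuousOn_of_contDiffAt fun x hx => hT x hx j i).mul (continuousOn_pd hV j)
  have h_sum : ∫ x in ball x₀ r, η x * max (V x) 0 ^ (q - 1) * (β x ⬝ᵥ (grad V x ᵥ* T x))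
      = ∑ i, ∫ x in ball x₀ r, η x * max (V x) 0 ^ (q - 1) *
          (β x i * ((fun j => T x j i) ⬝ᵥ grad V x)) := by
    rw [← integral_finsetSum _ fun i _ => h_int i]
    congr 1 with x
    rw [← Finset.mul_sum]
    simp only [dotProduct, vecMul, mul_comm]
  rw [h_sum]
  refine (Finset.abs_sum_le_sum_abs _ _).trans ((Finset.sum_le_sum fun i _ =>
    hη.abs_integral_lipschitzCoeff_mul_le hr hq hV (fun x hx j => hT x hx j i) hw hw1 (hβ i)
      (fun x hx j => hTκ x hx j i) (fun x hx => hdiv x hx i)).trans_eq ?_)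
  simp
  ring

end IsCutoff

end IntegrationByParts

/-! ### Quantitative `C^{1,1}` bounds -/

/-- Uniform `C^{1,1}` control of `G` on `S`: the function, its derivative and the Lipschitz
constant of the derivative are all bounded by `Λ`. -/
structure C11BoundedOn {E : Type*} [NormedAddCommGroup E] [NormedSpace ℝ E] (G : E → ℝ)
    (S : Set E) (Λ : ℝ) : Prop where
  nonneg : 0 ≤ Λ
  contDiffAt : ∀ P ∈ S, ContDiffAt ℝ 1 G P
  abs_le : ∀ P ∈ S, |G P| ≤ Λ
  norm_fderiv_le : ∀ P ∈ S, ‖fderiv ℝ G P‖ ≤ Λ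
  norm_fderiv_sub_le : ∀ P ∈ S, ∀ Q ∈ S, ‖fderiv ℝ G P - fderiv ℝ G Q‖ ≤ Λ * ‖P - Q‖

/-- `f` is bounded by `K` and `K`-Lipschitz on `S`. -/
structure BoundedLipschitzOn {E : Type*} [NormedAddCommGroup E] (f : E → ℝ) (S : Set E)
    (K : ℝ) : Prop where
  nonneg : 0 ≤ K
  abs_le : ∀ P ∈ S, |f P| ≤ K
  abs_sub_le : ∀ P ∈ S, ∀ Q ∈ S, |f P - f Q| ≤ K * ‖P - Q‖

section C11

variable {E : Type*} [NormedAddCommGroup E] {S : Set E}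

namespace BoundedLipschitzOn

variable {f g : E → ℝ} {K L : ℝ}

lemma add (hf : BoundedLipschitzOn f S K) (hg : BoundedLipschitzOn g S L) :
    BoundedLipschitzOn (fun P => f P + g P) S (K + L) where
  nonneg := add_nonneg hf.nonneg hg.nonneg
  abs_le P hP := (abs_add_le _ _).trans (add_le_add (hf.abs_le P hP) (hg.abs_le P hP))
  abs_sub_le P hP Q hQ := by
    rw [add_sub_add_comm, add_mul]
    exact (abs_add_le _ _).trans (add_le_add (hf.abs_sub_le P hP Q hQ) (hg.abs_sub_le P hP Q hQ))

lemma mul (hf : BoundedLipschitzOn f S K) (hg : BoundedLipschitzOn g S L) :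
    BoundedLipschitzOn (fun P => f P * g P) S (2 * K * L) where
  nonneg := mul_nonneg (mul_nonneg zero_le_two hf.nonneg) hg.nonneg
  abs_le P hP := by
    have h_mul := mul_le_mul (hf.abs_le P hP) (hg.abs_le P hP) (abs_nonneg _) hf.nonneg
    rw [abs_mul]
    linarith [mul_nonneg hf.nonneg hg.nonneg]
  abs_sub_le P hP Q hQ := by
    have hK := hf.nonneg
    calc |f P * g P - f Q * g Q| = |f P * (g P - g Q) + (f P - f Q) * g Q| := by ring_nf
      _ ≤ K * (L * ‖P - Q‖) + K * ‖P - Q‖ * L := by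
        refine (abs_add_le _ _).trans ?_
        rw [abs_mul, abs_mul]
        gcongr
        exacts [hf.abs_le P hP, hg.abs_sub_le P hP Q hQ, hf.abs_sub_le P hP Q hQ, hg.abs_le Q hQ]
      _ = _ := by ring

lemma lipschitzOnWith (hf : BoundedLipschitzOn f S K) : LipschitzOnWith ⟨K, hf.nonneg⟩ f S :=
  LipschitzOnWith.of_dist_le_mul fun P hP Q hQ => by
    rw [Real.dist_eq, dist_eq_norm]
    exact hf.abs_sub_le P hP Q hQ

end BoundedLipschitzOn

variable [NormedSpace ℝ E]

lemma C11On.exists_c11BoundedOn {G : E → ℝ} {U : Set E} (hG : C11On G U) (hU : IsOpen U)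
    (hS : IsCompact S) (hSU : S ⊆ U) : ∃ Λ, C11BoundedOn G S Λ := by
  have h_contDiffAt P (hP : P ∈ S) : ContDiffAt ℝ 1 G P :=
    hG.1.contDiffAt (hU.mem_nhds (hSU hP))
  have h_locally : LocallyLipschitzOn S (fderiv ℝ G) := by
    intro P hP
    obtain ⟨K, t, ht, hKt⟩ := hG.2 P (hSU hP)
    rw [hU.nhdsWithin_eq (hSU hP)] at ht
    refine ⟨K, t ∩ U, mem_nhdsWithin_of_mem_nhds
      (Filter.inter_mem ht (hU.mem_nhds (hSU hP))), fun a ha b hb => ?_⟩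
    rw [← fderivWithin_of_isOpen hU ha.2, ← fderivWithin_of_isOpen hU hb.2]
    exact hKt ha.1 hb.1
  obtain ⟨K, hK⟩ := h_locally.exists_lipschitzOnWith_of_compact hS
  obtain ⟨C₀, hC₀⟩ := hS.exists_bound_of_continuousOn (f := G) fun P hP =>
    (h_contDiffAt P hP).continuousAt.continuousWithinAt
  obtain ⟨C₁, hC₁⟩ := hS.exists_bound_of_continuousOn hK.continuousOn
  exact ⟨max K (max C₀ C₁),
    { nonneg := le_max_of_le_left K.2
      contDiffAt := h_contDiffAt
      abs_le := fun P hP => (hC₀ P hP).trans ((le_max_left _ _).trans (le_max_right _ _))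
      norm_fderiv_le := fun P hP => (hC₁ P hP).trans ((le_max_right _ _).trans (le_max_right _ _))
      norm_fderiv_sub_le := fun P hP Q hQ => (hK.norm_sub_le hP hQ).trans
        (mul_le_mul_of_nonneg_right (le_max_left _ _) (norm_nonneg _)) }⟩

namespace C11BoundedOn

variable {G : E → ℝ} {Λ : ℝ}

lemma mono (hG : C11BoundedOn G S Λ) {S' : Set E} (h_sub : S' ⊆ S) : C11BoundedOn G S' Λ where
  nonneg := hG.nonneg
  contDiffAt P hP := hG.contDiffAt P (h_sub hP)
  abs_le P hP := hG.abs_le P (h_sub hP)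
  norm_fderiv_le P hP := hG.norm_fderiv_le P (h_sub hP)
  norm_fderiv_sub_le P hP Q hQ := hG.norm_fderiv_sub_le P (h_sub hP) Q (h_sub hQ)

lemma hasFDerivWithinAt (hG : C11BoundedOn G S Λ) {P : E} (hP : P ∈ S) (s : Set E) :
    HasFDerivWithinAt G (fderiv ℝ G P) s P :=
  ((hG.contDiffAt P hP).differentiableAt one_ne_zero).hasFDerivAt.hasFDerivWithinAt

lemma abs_sub_sub_fderiv_le (hG : C11BoundedOn G S Λ) (hS : Convex ℝ S) {P Q : E} (hP : P ∈ S)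
    (hQ : Q ∈ S) : |G Q - G P - fderiv ℝ G P (Q - P)| ≤ Λ * ‖Q - P‖ ^ 2 := by
  have h_seg : segment ℝ P Q ⊆ S := hS.segment_subset hP hQ
  have h_mvt := (convex_segment P Q).norm_image_sub_le_of_norm_hasFDerivWithin_le' (f := G)
    (f' := fderiv ℝ G) (φ := fderiv ℝ G P) (C := Λ * ‖Q - P‖)
    (fun z hz => hG.hasFDerivWithinAt (h_seg hz) _)
    (fun z hz => (hG.norm_fderiv_sub_le z (h_seg hz) P hP).trans
      (mul_le_mul_of_nonneg_left (norm_sub_le_of_mem_segment hz) hG.nonneg))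
    (left_mem_segment _ _ _) (right_mem_segment _ _ _)
  exact h_mvt.trans_eq (by ring)

lemma boundedLipschitzOn (hG : C11BoundedOn G S Λ) (hS : Convex ℝ S) :
    BoundedLipschitzOn G S Λ where
  nonneg := hG.nonneg
  abs_le := hG.abs_le
  abs_sub_le _ hP _ hQ := hS.norm_image_sub_le_of_norm_hasFDerivWithin_le
    (fun _ hz => hG.hasFDerivWithinAt hz _) hG.norm_fderiv_le hQ hP

lemma boundedLipschitzOn_fderiv (hG : C11BoundedOn G S Λ) {v : E} (hv : ‖v‖ ≤ 1) :
    BoundedLipschitzOn (fun P => fderiv ℝ G P v) S Λ where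
  nonneg := hG.nonneg
  abs_le P hP := ((fderiv ℝ G P).le_of_opNorm_le_of_le (hG.norm_fderiv_le P hP) hv).trans_eq
    (mul_one Λ)
  abs_sub_le P hP Q hQ := ((fderiv ℝ G P - fderiv ℝ G Q).le_of_opNorm_le_of_le
    (hG.norm_fderiv_sub_le P hP Q hQ) hv).trans_eq (mul_one _)

end C11BoundedOn

-- `B ∘ f` need not be differentiable along `v`; otherwise `lineDeriv` is `0` by convention.
lemma BoundedLipschitzOn.abs_lineDeriv_comp_le {X : Type*} [NormedAddCommGroup X] [NormedSpace ℝ X]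
    {B : E → ℝ} {K : ℝ} (hB : BoundedLipschitzOn B S K) {f : X → E} {x : X}
    (hf : DifferentiableAt ℝ f x) (hfS : ∀ᶠ y in nhds x, f y ∈ S) (v : X) :
    |lineDeriv ℝ (fun y => B (f y)) x v| ≤ K * ‖fderiv ℝ f x v‖ := by
  by_cases h_diff : LineDifferentiableAt ℝ (fun y => B (f y)) x v
  · have h_line : Filter.Tendsto (fun t : ℝ => x + t • v) (nhdsWithin 0 {0}ᶜ) (nhds x) := by
      have h_cont : Continuous fun t : ℝ => x + t • v := by fun_prop
      simpa using (h_cont.tendsto 0).mono_left nhdsWithin_le_nhds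
    refine le_of_tendsto_of_tendsto h_diff.hasLineDerivAt.tendsto_slope_zero.norm
      ((hf.hasFDerivAt.hasLineDerivAt v).tendsto_slope_zero.norm.const_mul K) ?_
    filter_upwards [h_line.eventually hfS] with t ht
    rw [norm_smul, norm_smul, mul_left_comm]
    gcongr
    exact hB.abs_sub_le _ ht _ hfS.self_of_nhds
  · rw [lineDeriv_zero_of_not_lineDifferentiableAt h_diff, abs_zero]
    exact mul_nonneg hB.nonneg (norm_nonneg _)

end C11

/-! ### Functions of the first-order jet -/

/-- The space of jets `(x, z, ξ)`, on which the lower-order term is defined. -/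
abbrev Jet (n : ℕ) : Type := (Fin n → ℝ) × ℝ × (Fin n → ℝ)

/-- The `1`-jet of `u`. -/
noncomputable def jet {n : ℕ} (u : (Fin n → ℝ) → ℝ) (x : Fin n → ℝ) : Jet n := (x, u x, grad u x)

/-- The jets `(x, z, ξ)` with `x` in a closed ball and `|z|, |ξ_i| ≤ M`; a compact convex set. -/
def jetSet {n : ℕ} (x₀ : Fin n → ℝ) (r M : ℝ) : Set (Jet n) :=
  closedBall x₀ r ×ˢ (closedBall (0 : ℝ) M ×ˢ closedBall (0 : Fin n → ℝ) M)

/-- The augmented Hessian `∇²u - G(x, u, ∇u) I`. -/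
noncomputable def augHess {n : ℕ} (G : Jet n → ℝ) (u : (Fin n → ℝ) → ℝ) (x : Fin n → ℝ) :
    Matrix (Fin n) (Fin n) ℝ :=
  hess u x - G (jet u x) • 1

/-- The coefficient `b = ∂G/∂ξ` of the augmented Hessian in the gradient of `G(x, u, ∇u)`. -/
noncomputable def topCoeff {n : ℕ} (G : Jet n → ℝ) (P : Jet n) : Fin n → ℝ :=
  fun i => fderiv ℝ G P (0, 0, Pi.single i 1)

/-- The part `β = ∂G/∂x + ξ ∂G/∂z + G ∂G/∂ξ` of the gradient of `G(x, u, ∇u)` that is free of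
the augmented Hessian. -/
noncomputable def lowerCoeff {n : ℕ} (G : Jet n → ℝ) (P : Jet n) : Fin n → ℝ :=
  fun i => fderiv ℝ G P (Pi.single i 1, 0, 0) + P.2.2 i * fderiv ℝ G P (0, 1, 0)
    + G P * topCoeff G P i

section Jets

variable {n : ℕ} {x₀ x : Fin n → ℝ} {r M Λ : ℝ} {G : Jet n → ℝ} {u : (Fin n → ℝ) → ℝ}

lemma convex_jetSet : Convex ℝ (jetSet x₀ r M) :=
  (convex_closedBall _ _).prod ((convex_closedBall _ _).prod (convex_closedBall _ _))

lemma isCompact_jetSet : IsCompact (jetSet x₀ r M) :=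
  (isCompact_closedBall _ _).prod ((isCompact_closedBall _ _).prod (isCompact_closedBall _ _))

lemma jetSet_subset_jetSet {r' : ℝ} (hr : r ≤ r') : jetSet x₀ r M ⊆ jetSet x₀ r' M :=
  prod_mono (closedBall_subset_closedBall hr) Subset.rfl

lemma abs_apply_le_vnorm (ξ : Fin n → ℝ) (i : Fin n) : |ξ i| ≤ vnorm ξ := by
  rw [vnorm, ← Real.sqrt_sq_eq_abs]
  exact Real.sqrt_le_sqrt (Finset.single_le_sum (f := fun i => ξ i ^ 2)
    (fun _ _ => sq_nonneg _) (Finset.mem_univ i))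

lemma jet_mem_jetSet (hx : x ∈ closedBall x₀ r) (hu : |u x| + vnorm (grad u x) ≤ M) :
    jet u x ∈ jetSet x₀ r M := by
  have h_abs := abs_nonneg (u x)
  have h_vnorm : 0 ≤ vnorm (grad u x) := Real.sqrt_nonneg _
  refine ⟨hx, mem_closedBall_zero_iff.2 ?_, mem_closedBall_zero_iff.2 ?_⟩
  · exact (le_add_of_nonneg_right h_vnorm).trans hu
  · exact (pi_norm_le_iff_of_nonneg (by linarith)).2 fun i =>
      (abs_apply_le_vnorm (grad u x) i).trans (by linarith)

lemma abs_apply_le_of_mem_jetSet {P : Jet n} (hP : P ∈ jetSet x₀ r M) (i : Fin n) :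
    |P.2.2 i| ≤ M :=
  (norm_le_pi_norm P.2.2 i).trans (mem_closedBall_zero_iff.1 hP.2.2)

lemma boundedLipschitzOn_apply (hM : 0 ≤ M) (i : Fin n) :
    BoundedLipschitzOn (fun P : Jet n => P.2.2 i) (jetSet x₀ r M) (1 + M) where
  nonneg := by positivity
  abs_le P hP := (abs_apply_le_of_mem_jetSet hP i).trans (by linarith)
  abs_sub_le P _ Q _ := ((norm_le_pi_norm (P - Q).2.2 i).trans
    ((norm_snd_le _).trans (norm_snd_le _))).trans
      (le_mul_of_one_le_left (norm_nonneg _) (by linarith))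

lemma boundedLipschitzOn_topCoeff {S : Set (Jet n)} (hG : C11BoundedOn G S Λ) (i : Fin n) :
    BoundedLipschitzOn (fun P => topCoeff G P i) S Λ :=
  hG.boundedLipschitzOn_fderiv (by simp [Prod.norm_def, Pi.norm_single])

lemma boundedLipschitzOn_lowerCoeff (hM : 0 ≤ M) (hG : C11BoundedOn G (jetSet x₀ r M) Λ)
    (i : Fin n) : BoundedLipschitzOn (fun P => lowerCoeff G P i) (jetSet x₀ r M)
      (Λ + 2 * (1 + M) * Λ + 2 * Λ * Λ) :=
  ((hG.boundedLipschitzOn_fderiv (by simp [Prod.norm_def, Pi.norm_single])).add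
    ((boundedLipschitzOn_apply hM i).mul
      (hG.boundedLipschitzOn_fderiv (by simp [Prod.norm_def])))).add
    ((hG.boundedLipschitzOn convex_jetSet).mul (boundedLipschitzOn_topCoeff hG i))

lemma contDiffAt_jet (hu : ContDiffAt ℝ 2 u x) : ContDiffAt ℝ 1 (jet u) x :=
  contDiffAt_id.prodMk ((hu.of_le (by norm_num)).prodMk
    (contDiffAt_pi.2 fun i => contDiffAt_pd hu (by norm_num) i))

lemma fderiv_jet (hu : ContDiffAt ℝ 2 u x) (j : Fin n) :
    fderiv ℝ (jet u) x (Pi.single j 1) = (Pi.single j 1, pd j u x, hess u x j) := by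
  have h_pd m : HasFDerivAt (pd m u) (fderiv ℝ (pd m u) x) x :=
    ((contDiffAt_pd (m := 1) hu (by norm_num) m).differentiableAt one_ne_zero).hasFDerivAt
  have h_jet : HasFDerivAt (jet u) ((ContinuousLinearMap.id ℝ (Fin n → ℝ)).prod
      ((fderiv ℝ u x).prod (ContinuousLinearMap.pi fun m => fderiv ℝ (pd m u) x))) x :=
    (hasFDerivAt_id x).prodMk
      ((hu.differentiableAt two_ne_zero).hasFDerivAt.prodMk (hasFDerivAt_pi.2 h_pd))
  rw [h_jet.fderiv]
  rfl

lemma norm_fderiv_jet_le (hu : ContDiffAt ℝ 2 u x) (hM : 0 ≤ M) {w : ℝ} (hw : 1 ≤ w)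
    (h_jet : jet u x ∈ jetSet x₀ r M) (h_hess : ∀ i j, |hess u x i j| ≤ w) (j : Fin n) :
    ‖fderiv ℝ (jet u) x (Pi.single j 1)‖ ≤ (1 + M) * w := by
  have hw_le : w ≤ (1 + M) * w := le_mul_of_one_le_left (by linarith) (by linarith)
  have hM_le : M ≤ (1 + M) * w := by nlinarith
  rw [fderiv_jet hu, norm_prod_le_iff, norm_prod_le_iff]
  refine ⟨by simpa [Pi.norm_single] using hw.trans hw_le,
    (abs_apply_le_of_mem_jetSet h_jet j).trans hM_le, ?_⟩
  exact (pi_norm_le_iff_of_nonneg (by linarith)).2 fun m => (h_hess j m).trans hw_le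

lemma contDiffAt_comp_jet (hu : ContDiffAt ℝ 2 u x) (hG : ContDiffAt ℝ 1 G (jet u x)) :
    ContDiffAt ℝ 1 (fun y => G (jet u y)) x :=
  hG.comp x (contDiffAt_jet hu)

lemma clm_jet_apply (L : Jet n →L[ℝ] ℝ) (v : Fin n → ℝ) (c : ℝ) (ξ : Fin n → ℝ) :
    L (v, c, ξ) = L (v, 0, 0) + c * L (0, 1, 0) + ∑ m, L (0, 0, Pi.single m 1) * ξ m := by
  have h_split : ((v, c, ξ) : Jet n)
      = (v, 0, 0) + c • (0, 1, 0) + ContinuousLinearMap.inr ℝ (Fin n → ℝ) (ℝ × (Fin n → ℝ))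
          (ContinuousLinearMap.inr ℝ ℝ (Fin n → ℝ) ξ) := by simp
  rw [h_split, map_add, map_add, map_smul, smul_eq_mul]
  congr 1
  rw [← ContinuousLinearMap.comp_apply, ← ContinuousLinearMap.comp_apply,
    ← ContinuousLinearMap.coe_coe, LinearMap.pi_apply_eq_sum_univ]
  simp [mul_comm, Pi.single_comm, ← Pi.single_apply]

lemma grad_comp_jet (hu : ContDiffAt ℝ 2 u x) (hG : ContDiffAt ℝ 1 G (jet u x)) :
    grad (fun y => G (jet u y)) x
      = lowerCoeff G (jet u x) + topCoeff G (jet u x) ᵥ* augHess G u x := by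
  funext i
  have h_chain : HasFDerivAt (fun y => G (jet u y)) _ x :=
    (hG.differentiableAt one_ne_zero).hasFDerivAt.comp x
      ((contDiffAt_jet hu).differentiableAt one_ne_zero).hasFDerivAt
  have h_symm m : hess u x i m = hess u x m i := pd_comm hu i m
  rw [grad, pd, h_chain.fderiv, ContinuousLinearMap.comp_apply, fderiv_jet hu, clm_jet_apply]
  simp only [h_symm, Pi.add_apply, augHess, vecMul_sub, vecMul_smul, vecMul_one, Pi.sub_apply,
    Pi.smul_apply, smul_eq_mul, vecMul, dotProduct, lowerCoeff, topCoeff, jet, grad]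
  ring

lemma abs_apply_le_matNorm (A : Matrix (Fin n) (Fin n) ℝ) (i j : Fin n) : |A i j| ≤ matNorm A := by
  have h_op := (LinearMap.toContinuousLinearMap (Matrix.toEuclideanLin A)).le_opNorm
    (EuclideanSpace.single j 1)
  rw [PiLp.norm_single, norm_one, mul_one] at h_op
  simpa [matNorm, Matrix.toLpLin_apply] using (PiLp.norm_apply_le _ i).trans h_op

lemma BoundedLipschitzOn.isLipschitzCoeff {B : Jet n → ℝ} {K : ℝ} {w : (Fin n → ℝ) → ℝ} {r' : ℝ}
    (hB : BoundedLipschitzOn B (jetSet x₀ r' M) K) (hM : 0 ≤ M)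
    (hu : ∀ x ∈ closedBall x₀ r, ContDiffAt ℝ 2 u x)
    (h_jet : ∀ x ∈ closedBall x₀ r, jet u x ∈ jetSet x₀ r' M) (hw : ∀ x ∈ ball x₀ r, 1 ≤ w x)
    (h_hess : ∀ x ∈ ball x₀ r, ∀ i j, |hess u x i j| ≤ w x) :
    IsLipschitzCoeff (fun x => B (jet u x)) w x₀ r (K * (1 + M)) where
  exists_lipschitz := by
    have h_contDiff : ContDiffOn ℝ 1 (jet u) (closedBall x₀ r) := fun x hx =>
      (contDiffAt_jet (hu x hx)).contDiffWithinAt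
    obtain ⟨L, hL⟩ := h_contDiff.exists_lipschitzOnWith one_ne_zero (convex_closedBall _ _)
      (isCompact_closedBall _ _)
    exact ⟨_, hB.lipschitzOnWith.comp hL h_jet⟩
  abs_le x hx := (hB.abs_le _ (h_jet x (ball_subset_closedBall hx))).trans
    (le_mul_of_one_le_right hB.nonneg (by linarith))
  abs_lineDeriv_le x hx j := by
    have hx' := ball_subset_closedBall hx
    have h_near : ∀ᶠ y in nhds x, jet u y ∈ jetSet x₀ r' M := by
      filter_upwards [isOpen_ball.mem_nhds hx] with y hy using h_jet y (ball_subset_closedBall hy)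
    rw [mul_assoc]
    exact (hB.abs_lineDeriv_comp_le ((contDiffAt_jet (hu x hx')).differentiableAt one_ne_zero)
      h_near _).trans (mul_le_mul_of_nonneg_left
        (norm_fderiv_jet_le (hu x hx') hM (hw x hx) (h_jet x hx') (h_hess x hx) j) hB.nonneg)

end Jets

/-! ### Averages over segments -/

/-- The average of `f` over the segment from `x` to `x + v`. -/
noncomputable def segAvg {n : ℕ} (f : (Fin n → ℝ) → ℝ) (v x : Fin n → ℝ) : ℝ :=
  ∫ t in (0 : ℝ)..1, f (x + t • v)

section SegAvg

variable {n : ℕ} {x₀ x v : Fin n → ℝ} {r r' : ℝ} {f w : (Fin n → ℝ) → ℝ}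

lemma add_smul_mem_ball (hr : r + ‖v‖ < r') (hx : x ∈ closedBall x₀ r) {t : ℝ}
    (ht : t ∈ Icc (0 : ℝ) 1) : x + t • v ∈ ball x₀ r' := by
  have h_smul : ‖t • v‖ ≤ ‖v‖ := by
    rw [norm_smul, Real.norm_of_nonneg ht.1]
    exact mul_le_of_le_one_left (norm_nonneg _) ht.2
  rw [mem_closedBall_iff_norm] at hx
  rw [mem_ball_iff_norm, add_sub_right_comm]
  linarith [norm_add_le (x - x₀) (t • v)]

lemma add_mem_ball (hr : r + ‖v‖ < r') (hx : x ∈ closedBall x₀ r) : x + v ∈ ball x₀ r' := by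
  simpa using add_smul_mem_ball hr hx (right_mem_Icc.2 zero_le_one)

lemma continuousOn_comp_segment (hr : r + ‖v‖ < r') (hf : ContinuousOn f (closedBall x₀ r'))
    (hx : x ∈ closedBall x₀ r) : ContinuousOn (fun t : ℝ => f (x + t • v)) (Icc 0 1) :=
  hf.comp (by fun_prop) fun _ ht => ball_subset_closedBall (add_smul_mem_ball hr hx ht)

lemma segAvg_nonneg (hf : ∀ t ∈ Icc (0 : ℝ) 1, 0 ≤ f (x + t • v)) : 0 ≤ segAvg f v x :=
  intervalIntegral.integral_nonneg zero_le_one hf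

lemma rpow_segAvg_le {s : ℝ} (hs : 1 ≤ s)
    (hf : ContinuousOn (fun t : ℝ => f (x + t • v)) (Icc 0 1))
    (hf0 : ∀ t ∈ Icc (0 : ℝ) 1, 0 ≤ f (x + t • v)) :
    segAvg f v x ^ s ≤ segAvg (fun y => f y ^ s) v x := by
  have h_rpow : ContinuousOn (fun t : ℝ => f (x + t • v) ^ s) (Icc 0 1) :=
    hf.rpow_const fun _ _ => Or.inr (by linarith)
  have h_jensen := (convexOn_rpow hs).map_set_average_le (μ := volume) (t := Icc (0 : ℝ) 1)
    (Real.continuous_rpow_const (by linarith)).continuousOn isClosed_Ici (by simp) (by simp)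
    ((ae_restrict_iff' measurableSet_Icc).2 (.of_forall hf0))
    (hf.integrableOn_compact isCompact_Icc) (h_rpow.integrableOn_compact isCompact_Icc)
  simpa [setAverage_eq, integral_Icc_eq_integral_Ioc, segAvg,
    intervalIntegral.integral_of_le] using h_jensen

lemma integrable_comp_segment (hr : r + ‖v‖ < r') (hf : ContinuousOn f (closedBall x₀ r')) :
    Integrable (fun p : (Fin n → ℝ) × ℝ => f (p.1 + p.2 • v))
      ((volume.restrict (ball x₀ r)).prod (volume.restrict (Ioc (0 : ℝ) 1))) := by
  have h_cont : ContinuousOn (fun p : (Fin n → ℝ) × ℝ => f (p.1 + p.2 • v))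
      (closedBall x₀ r ×ˢ Icc (0 : ℝ) 1) :=
    hf.comp (by fun_prop) fun p hp => ball_subset_closedBall (add_smul_mem_ball hr hp.1 hp.2)
  rw [Measure.prod_restrict]
  exact (h_cont.integrableOn_compact (μ := volume.prod volume)
    ((isCompact_closedBall x₀ r).prod isCompact_Icc)).mono_set
      (prod_mono ball_subset_closedBall Ioc_subset_Icc_self)

lemma integrableOn_segAvg (hr : r + ‖v‖ < r') (hf : ContinuousOn f (closedBall x₀ r')) :
    IntegrableOn (segAvg f v) (ball x₀ r) := by
  have h_segAvg : segAvg f v = fun x => ∫ t in Ioc (0 : ℝ) 1, f (x + t • v) :=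
    funext fun _ => intervalIntegral.integral_of_le zero_le_one
  exact h_segAvg ▸ (integrable_comp_segment hr hf).integral_prod_left

lemma setIntegral_ball_add_le (hr : r + ‖v‖ < r') (hf : ContinuousOn f (closedBall x₀ r'))
    (hf0 : ∀ x ∈ ball x₀ r', 0 ≤ f x) :
    ∫ x in ball x₀ r, f (x + v) ≤ ∫ x in ball x₀ r', f x := by
  have h_preimage : (· + v) ⁻¹' ball (x₀ + v) r = ball x₀ r := by
    ext x
    simp [dist_eq_norm]
  have h_subset : ball (x₀ + v) r ⊆ ball x₀ r' := ball_subset_ball' (by simpa using hr.le)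
  calc ∫ x in ball x₀ r, f (x + v) = ∫ y in ball (x₀ + v) r, f y := by
        rw [← h_preimage]
        exact (measurePreserving_add_right volume v).setIntegral_preimage_emb
          (measurableEmbedding_addRight v) f _
    _ ≤ ∫ x in ball x₀ r', f x := setIntegral_mono_set (integrableOn_ball hf)
        ((ae_restrict_iff' measurableSet_ball).2 (.of_forall hf0)) h_subset.eventuallyLE

lemma setIntegral_segAvg_le (hr : r + ‖v‖ < r') (hf : ContinuousOn f (closedBall x₀ r'))
    (hf0 : ∀ x ∈ ball x₀ r', 0 ≤ f x) :
    ∫ x in ball x₀ r, segAvg f v x ≤ ∫ x in ball x₀ r', f x := by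
  have h_int := integrable_comp_segment hr hf
  have h_slice : ∀ t ∈ Ioc (0 : ℝ) 1, ∫ x in ball x₀ r, f (x + t • v) ≤ ∫ x in ball x₀ r', f x :=
    fun t ht => by
      refine setIntegral_ball_add_le ?_ hf hf0
      rw [norm_smul, Real.norm_of_nonneg ht.1.le]
      linarith [mul_le_of_le_one_left (norm_nonneg v) ht.2]
  simp only [segAvg, intervalIntegral.integral_of_le (zero_le_one (α := ℝ))]
  calc ∫ x in ball x₀ r, ∫ t in Ioc (0 : ℝ) 1, f (x + t • v)
      = ∫ t in Ioc (0 : ℝ) 1, ∫ x in ball x₀ r, f (x + t • v) := integral_integral_swap h_int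
    _ ≤ ∫ _ in Ioc (0 : ℝ) 1, ∫ x in ball x₀ r', f x :=
        setIntegral_mono_on h_int.integral_prod_right (by simp)
          measurableSet_Ioc h_slice
    _ = ∫ x in ball x₀ r', f x := by simp

lemma norm_add_sub_le_segAvg {F : Type*} [NormedAddCommGroup F] [NormedSpace ℝ F]
    [CompleteSpace F] {g : (Fin n → ℝ) → F}
    (hg : ∀ t ∈ Icc (0 : ℝ) 1, ContDiffAt ℝ 1 g (x + t • v))
    (hw : ContinuousOn (fun t : ℝ => w (x + t • v)) (Icc 0 1))
    (hgw : ∀ t ∈ Icc (0 : ℝ) 1, ‖fderiv ℝ g (x + t • v) v‖ ≤ w (x + t • v)) :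
    ‖g (x + v) - g x‖ ≤ segAvg w v x := by
  have h_uIcc : uIcc (0 : ℝ) 1 = Icc 0 1 := uIcc_of_le zero_le_one
  have h_deriv : ∀ t ∈ uIcc (0 : ℝ) 1,
      HasDerivAt (fun t : ℝ => g (x + t • v)) (fderiv ℝ g (x + t • v) v) t := fun t ht => by
    have h_line : HasDerivAt (fun t : ℝ => x + t • v) v t := by
      simpa using ((hasDerivAt_id t).smul_const v).const_add x
    exact (((hg t (h_uIcc ▸ ht)).differentiableAt one_ne_zero).hasFDerivAt).comp_hasDerivAt t h_line
  have h_cont : ContinuousOn (fun t : ℝ => fderiv ℝ g (x + t • v) v) (Icc 0 1) := fun t ht => by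
    have h_fderiv : ContinuousAt (fun t : ℝ => fderiv ℝ g (x + t • v)) t :=
      ContinuousAt.comp (f := fun t : ℝ => x + t • v)
        ((hg t ht).fderiv_right (m := 0) (by simp)).continuousAt (by fun_prop)
    exact (h_fderiv.clm_apply continuousAt_const).continuousWithinAt
  have h_ftc := intervalIntegral.integral_eq_sub_of_hasDerivAt h_deriv
    (ContinuousOn.intervalIntegrable (h_uIcc ▸ h_cont))
  simp only [one_smul, zero_smul, add_zero] at h_ftc
  rw [← h_ftc]
  exact intervalIntegral.norm_integral_le_of_norm_le zero_le_one
    (.of_forall fun t ht => hgw t (Ioc_subset_Icc_self ht))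
    (ContinuousOn.intervalIntegrable (h_uIcc ▸ hw))

end SegAvg

/-! ### Second difference quotients -/

section DifferenceQuotients

variable {n : ℕ} {x : Fin n → ℝ} {h : ℝ} {u : (Fin n → ℝ) → ℝ}

lemma contDiffAt_ddq {N : WithTop ℕ∞} {l : Fin n} (h_mid : ContDiffAt ℝ N u x)
    (h_add : ContDiffAt ℝ N u (x + h • Pi.single l 1))
    (h_sub : ContDiffAt ℝ N u (x - h • Pi.single l 1)) : ContDiffAt ℝ N (ddq l h u) x := by
  have h_right : ContDiffAt ℝ N (fun y => u (y + h • Pi.single l 1)) x :=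
    h_add.comp (f := fun y => y + h • Pi.single l 1) x (contDiffAt_id.add contDiffAt_const)
  have h_left : ContDiffAt ℝ N (fun y => u (y - h • Pi.single l 1)) x :=
    h_sub.comp (f := fun y => y - h • Pi.single l 1) x (contDiffAt_id.sub contDiffAt_const)
  exact ((h_right.sub (contDiffAt_const.mul h_mid)).add h_left).div_const _

lemma pd_ddq {l : Fin n} (h_mid : DifferentiableAt ℝ u x)
    (h_add : DifferentiableAt ℝ u (x + h • Pi.single l 1))
    (h_sub : DifferentiableAt ℝ u (x - h • Pi.single l 1)) (m : Fin n) :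
    pd m (ddq l h u) x = ddq l h (pd m u) x := by
  have h_right := h_add.hasFDerivAt.comp x ((hasFDerivAt_id x).add_const (h • Pi.single l 1))
  have h_left := h_sub.hasFDerivAt.comp x ((hasFDerivAt_id x).sub_const (h • Pi.single l 1))
  have h_ddq : HasFDerivAt (ddq l h u) _ x :=
    ((h_right.sub (h_mid.hasFDerivAt.const_mul 2)).add h_left).mul_const ((h ^ 2)⁻¹)
  rw [pd, h_ddq.fderiv]
  simp [ddq, pd]
  ring

lemma C11BoundedOn.abs_ddq_comp_sub_le {E : Type*} [NormedAddCommGroup E] [NormedSpace ℝ E]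
    {G : E → ℝ} {S : Set E} {Λ : ℝ} (hG : C11BoundedOn G S Λ) (hS : Convex ℝ S)
    {J : (Fin n → ℝ) → E} {l : Fin n} (hh : h ≠ 0) (h_mid : J x ∈ S)
    (h_add : J (x + h • Pi.single l 1) ∈ S) (h_sub : J (x - h • Pi.single l 1) ∈ S) {a b : ℝ}
    (ha : ‖J (x + h • Pi.single l 1) - J x‖ ≤ |h| * a)
    (hb : ‖J (x - h • Pi.single l 1) - J x‖ ≤ |h| * b) :
    |ddq l h (fun y => G (J y)) x - fderiv ℝ G (J x) ((h ^ 2)⁻¹ •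
        (J (x + h • Pi.single l 1) - J x + (J (x - h • Pi.single l 1) - J x)))|
      ≤ Λ * (a ^ 2 + b ^ 2) := by
  have h_right := hG.abs_sub_sub_fderiv_le hS h_mid h_add
  have h_left := hG.abs_sub_sub_fderiv_le hS h_mid h_sub
  have h_taylor : ddq l h (fun y => G (J y)) x - fderiv ℝ G (J x) ((h ^ 2)⁻¹ •
        (J (x + h • Pi.single l 1) - J x + (J (x - h • Pi.single l 1) - J x)))
      = ((G (J (x + h • Pi.single l 1)) - G (J x)
            - fderiv ℝ G (J x) (J (x + h • Pi.single l 1) - J x))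
        + (G (J (x - h • Pi.single l 1)) - G (J x)
            - fderiv ℝ G (J x) (J (x - h • Pi.single l 1) - J x))) / h ^ 2 := by
    rw [map_smul, map_add, smul_eq_mul, ddq]
    ring
  rw [h_taylor, abs_div, abs_of_pos (show 0 < h ^ 2 by positivity), div_le_iff₀ (by positivity)]
  have h_sq {y b : ℝ} (hy : 0 ≤ y) (hyb : y ≤ |h| * b) : y ^ 2 ≤ h ^ 2 * b ^ 2 := by
    rw [← sq_abs h, ← mul_pow]
    gcongr
  linarith [abs_add_le (G (J (x + h • Pi.single l 1)) - G (J x)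
      - fderiv ℝ G (J x) (J (x + h • Pi.single l 1) - J x))
      (G (J (x - h • Pi.single l 1)) - G (J x)
      - fderiv ℝ G (J x) (J (x - h • Pi.single l 1) - J x)),
    mul_le_mul_of_nonneg_left (h_sq (norm_nonneg _) ha) hG.nonneg,
    mul_le_mul_of_nonneg_left (h_sq (norm_nonneg _) hb) hG.nonneg]

lemma clm_second_difference_jet (L : Jet n →L[ℝ] ℝ) (l : Fin n) (h : ℝ)
    (u : (Fin n → ℝ) → ℝ) (x : Fin n → ℝ) :
    L ((h ^ 2)⁻¹ • (jet u (x + h • Pi.single l 1) - jet u x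
        + (jet u (x - h • Pi.single l 1) - jet u x)))
      = ddq l h u x * L (0, 1, 0) + ∑ m, L (0, 0, Pi.single m 1) * ddq l h (pd m u) x := by
  have h_jet : (h ^ 2)⁻¹ • (jet u (x + h • Pi.single l 1) - jet u x
        + (jet u (x - h • Pi.single l 1) - jet u x))
      = (0, ddq l h u x, fun m => ddq l h (pd m u) x) := by
    refine Prod.ext ?_ (Prod.ext ?_ (funext fun m => ?_)) <;> simp [jet, ddq, grad] <;> ring
  rw [h_jet, clm_jet_apply]
  simp [← Prod.zero_eq_mk]

end DifferenceQuotients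

/-! ### The augmented Hessian of a function with majorised second derivatives -/

/-- The function `w ≥ 1` dominates the second derivatives of `u` on a ball, while the jets of `u`
stay in a set on which `G` is bounded by `Λ` in `C^{1,1}`. In the application,
`w = Δu + C₁`. -/
structure HessianMajorant {n : ℕ} (G : Jet n → ℝ) (u w : (Fin n → ℝ) → ℝ) (x₀ : Fin n → ℝ)
    (r M Λ : ℝ) : Prop where
  nonneg : 0 ≤ M
  c11 : C11BoundedOn G (jetSet x₀ r M) Λ
  contDiffAt : ∀ x ∈ closedBall x₀ r, ContDiffAt ℝ 3 u x
  jet_mem : ∀ x ∈ ball x₀ r, jet u x ∈ jetSet x₀ r M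
  continuousOn : ContinuousOn w (closedBall x₀ r)
  one_le : ∀ x ∈ ball x₀ r, 1 ≤ w x
  abs_hess_le : ∀ x ∈ ball x₀ r, ∀ i j, |hess u x i j| ≤ w x

/-- A common bound for the Newton tensors of the augmented Hessian and their divergence, relative
to powers of the majorant. -/
def newtonConst (n : ℕ) (M Λ : ℝ) : ℝ :=
  (1 + n ^ 2 * (Λ * (1 + M))) * (1 + (n ^ 2 + n) * (1 + Λ)) ^ n

namespace HessianMajorant

variable {n : ℕ} {G : Jet n → ℝ} {u w : (Fin n → ℝ) → ℝ} {x₀ x : Fin n → ℝ} {r r' M Λ h : ℝ}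

lemma contDiffAt_two (H : HessianMajorant G u w x₀ r' M Λ) (hx : x ∈ ball x₀ r') :
    ContDiffAt ℝ 2 u x :=
  (H.contDiffAt x (ball_subset_closedBall hx)).of_le (by norm_num)

lemma contDiffAt_lower (H : HessianMajorant G u w x₀ r' M Λ) (hx : x ∈ ball x₀ r') :
    ContDiffAt ℝ 1 (fun y => G (jet u y)) x :=
  contDiffAt_comp_jet (H.contDiffAt_two hx) (H.c11.contDiffAt _ (H.jet_mem x hx))

lemma contDiffAt_augHess (H : HessianMajorant G u w x₀ r' M Λ) (hx : x ∈ ball x₀ r')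
    (i j : Fin n) : ContDiffAt ℝ 1 (fun y => augHess G u y i j) x :=
  (contDiffAt_pd (m := 1) (contDiffAt_pd (m := 2)
    (H.contDiffAt x (ball_subset_closedBall hx)) (by norm_num) j) (by norm_num) i).sub
      ((H.contDiffAt_lower hx).mul contDiffAt_const)

lemma augHess_transpose (H : HessianMajorant G u w x₀ r' M Λ) (hx : x ∈ ball x₀ r') :
    (augHess G u x)ᵀ = augHess G u x := by
  have h_symm : (hess u x)ᵀ = hess u x :=
    Matrix.ext fun i j => pd_comm (H.contDiffAt_two hx) j i
  rw [augHess, transpose_sub, h_symm, transpose_smul, transpose_one]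

lemma abs_augHess_le (H : HessianMajorant G u w x₀ r' M Λ) (hx : x ∈ ball x₀ r') (i j : Fin n) :
    |augHess G u x i j| ≤ (1 + Λ) * w x := by
  have h_low : |(G (jet u x) • (1 : Matrix (Fin n) (Fin n) ℝ)) i j| ≤ Λ := by
    rw [Matrix.smul_apply, one_apply]
    split_ifs
    · simpa using H.c11.abs_le _ (H.jet_mem x hx)
    · simpa using H.c11.nonneg
  rw [augHess, Matrix.sub_apply]
  have hw := H.one_le x hx
  have hΛ := H.c11.nonneg
  calc |hess u x i j - (G (jet u x) • (1 : Matrix (Fin n) (Fin n) ℝ)) i j|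
      ≤ w x + Λ := (abs_sub _ _).trans (add_le_add (H.abs_hess_le x hx i j) h_low)
    _ ≤ (1 + Λ) * w x := by nlinarith

lemma abs_pd_lower_le (H : HessianMajorant G u w x₀ r' M Λ) (hx : x ∈ ball x₀ r') (j : Fin n) :
    |pd j (fun y => G (jet u y)) x| ≤ Λ * ((1 + M) * w x) := by
  have hG := (H.c11.contDiffAt _ (H.jet_mem x hx)).differentiableAt one_ne_zero
  have h_jet := (contDiffAt_jet (H.contDiffAt_two hx)).differentiableAt one_ne_zero
  have h_chain : HasFDerivAt (fun y => G (jet u y)) _ x := hG.hasFDerivAt.comp x h_jet.hasFDerivAt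
  rw [pd, h_chain.fderiv, ContinuousLinearMap.comp_apply]
  exact (fderiv ℝ G (jet u x)).le_of_opNorm_le_of_le (H.c11.norm_fderiv_le _ (H.jet_mem x hx))
    (norm_fderiv_jet_le (H.contDiffAt_two hx) H.nonneg (H.one_le x hx) (H.jet_mem x hx)
      (H.abs_hess_le x hx) j)

lemma pow_le_newtonConst_mul (H : HessianMajorant G u w x₀ r' M Λ) (hx : x ∈ ball x₀ r') {m : ℕ}
    (hm : m ≤ n) : (1 + n ^ 2 * (Λ * (1 + M))) * ((n ^ 2 + n) * ((1 + Λ) * w x)) ^ m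
      ≤ newtonConst n M Λ * w x ^ m := by
  have hM := H.nonneg
  have hΛ := H.c11.nonneg
  have hw := zero_le_one.trans (H.one_le x hx)
  rw [newtonConst, ← mul_assoc ((n : ℝ) ^ 2 + n), mul_pow, ← mul_assoc]
  gcongr
  calc ((n ^ 2 + n) * (1 + Λ)) ^ m ≤ (1 + (n ^ 2 + n) * (1 + Λ)) ^ m := by gcongr; linarith
    _ ≤ (1 + (n ^ 2 + n) * (1 + Λ)) ^ n :=
      pow_le_pow_right₀ (le_add_of_nonneg_right (by positivity)) hm

lemma abs_esymmMat_and_newtonT_le (H : HessianMajorant G u w x₀ r' M Λ) (hx : x ∈ ball x₀ r')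
    {m : ℕ} (hm : m ≤ n) : |esymmMat m (augHess G u x)| ≤ newtonConst n M Λ * w x ^ m ∧
      ∀ i j, |newtonT m (augHess G u x) i j| ≤ newtonConst n M Λ * w x ^ m := by
  have hM := H.nonneg
  have hΛ := H.c11.nonneg
  have hw := zero_le_one.trans (H.one_le x hx)
  have h_bound := _root_.abs_esymmMat_and_newtonT_le (A := augHess G u x) (m := m)
    (show 0 ≤ (1 + Λ) * w x by positivity) (H.abs_augHess_le hx) hm
  have h_const : ((n ^ 2 + n) * ((1 + Λ) * w x)) ^ m ≤ newtonConst n M Λ * w x ^ m :=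
    (le_mul_of_one_le_left (by positivity) (le_add_of_nonneg_right (by positivity))).trans
      (H.pow_le_newtonConst_mul hx hm)
  exact ⟨h_bound.1.trans h_const, fun i j => (h_bound.2 i j).trans h_const⟩

lemma matDiv_newtonT (H : HessianMajorant G u w x₀ r' M Λ) (hx : x ∈ ball x₀ r') {m : ℕ}
    (hm : m < n) : matDiv (fun y => newtonT (m + 1) (augHess G u y)) x
      = -(n - (m + 1) : ℝ) • (grad (fun y => G (jet u y)) x ᵥ* newtonT m (augHess G u x)) :=
  matDiv_newtonT_of_codazzi (H.contDiffAt_augHess hx)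
    (codazzi_hess_sub_smul_one (H.contDiffAt x (ball_subset_closedBall hx))
      ((H.contDiffAt_lower hx).differentiableAt one_ne_zero)) hm

lemma abs_grad_vecMul_newtonT_le (H : HessianMajorant G u w x₀ r' M Λ) (hx : x ∈ ball x₀ r')
    {m : ℕ} (hm : m ≤ n) (j : Fin n) :
    |(grad (fun y => G (jet u y)) x ᵥ* newtonT m (augHess G u x)) j|
      ≤ n * (Λ * ((1 + M) * w x) * ((n ^ 2 + n) * ((1 + Λ) * w x)) ^ m) := by
  have hM := H.nonneg
  have hΛ := H.c11.nonneg
  have hw := zero_le_one.trans (H.one_le x hx)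
  have h_newton i : |newtonT m (augHess G u x) i j| ≤ ((n ^ 2 + n) * ((1 + Λ) * w x)) ^ m :=
    (_root_.abs_esymmMat_and_newtonT_le (by positivity) (H.abs_augHess_le hx) hm).2 i j
  rw [← nsmul_eq_mul, ← Fin.sum_const, vecMul, dotProduct]
  refine (Finset.abs_sum_le_sum_abs _ _).trans (Finset.sum_le_sum fun i _ => ?_)
  rw [abs_mul]
  exact mul_le_mul (H.abs_pd_lower_le hx i) (h_newton i) (abs_nonneg _) (by positivity)

lemma abs_matDiv_newtonT_le (H : HessianMajorant G u w x₀ r' M Λ) (hx : x ∈ ball x₀ r') {m : ℕ}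
    (hm : m ≤ n) (j : Fin n) : |matDiv (fun y => newtonT m (augHess G u y)) x j|
      ≤ newtonConst n M Λ * w x ^ (m + 1) := by
  have hM := H.nonneg
  have hΛ := H.c11.nonneg
  have hw := H.one_le x hx
  cases m with
  | zero =>
    have h_const : matDiv (fun y => newtonT 0 (augHess G u y)) x j = 0 := by
      simp [matDiv, newtonT, pd]
    rw [h_const, abs_zero, newtonConst]
    positivity
  | succ m =>
    have h_factor : |-(n - (m + 1) : ℝ)| ≤ n := by
      have : ((m + 1 : ℕ) : ℝ) ≤ n := by exact_mod_cast hm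
      push_cast at this
      rw [abs_neg, abs_of_nonneg (by linarith)]
      linarith
    rw [H.matDiv_newtonT hx hm, Pi.smul_apply, smul_eq_mul, abs_mul]
    calc |-(n - (m + 1) : ℝ)| * |(grad (fun y => G (jet u y)) x ᵥ* newtonT m (augHess G u x)) j|
        ≤ n * (n * (Λ * ((1 + M) * w x) * ((n ^ 2 + n) * ((1 + Λ) * w x)) ^ m)) := by
          gcongr
          exact H.abs_grad_vecMul_newtonT_le hx (m.le_succ.trans hm) j
      _ = n ^ 2 * (Λ * (1 + M)) * ((n ^ 2 + n) * ((1 + Λ) * w x)) ^ m * w x := by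
          ring
      _ ≤ (1 + n ^ 2 * (Λ * (1 + M))) * ((n ^ 2 + n) * ((1 + Λ) * w x)) ^ m * w x ^ 2 := by
          gcongr
          · linarith
          · exact le_self_pow₀ hw two_ne_zero
      _ ≤ newtonConst n M Λ * w x ^ m * w x ^ 2 := by
          exact mul_le_mul_of_nonneg_right (H.pow_le_newtonConst_mul hx (m.le_succ.trans hm))
            (sq_nonneg _)
      _ = newtonConst n M Λ * w x ^ (m + 1 + 1) := by ring

end HessianMajorant

/-! ### The discrete Laplacian and the second-order Taylor remainder -/

/-- The shifted discrete Laplacian `ṽ = ∑ₗ Δₗₗʰ u + C₁`. -/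
noncomputable def discreteLapl {n : ℕ} (h C₁ : ℝ) (u : (Fin n → ℝ) → ℝ) (x : Fin n → ℝ) : ℝ :=
  ∑ l, ddq l h u x + C₁

/-- What is left of `∑ₗ Δₗₗʰ (G(x, u, ∇u))` after removing its part `b · ∇ṽ` with third order
derivatives of `u`. -/
noncomputable def taylorRemainder {n : ℕ} (G : Jet n → ℝ) (u : (Fin n → ℝ) → ℝ) (h C₁ : ℝ)
    (x : Fin n → ℝ) : ℝ :=
  ∑ l, ddq l h (fun y => G (jet u y)) x
    - topCoeff G (jet u x) ⬝ᵥ grad (discreteLapl h C₁ u) x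

section Translations

variable {n : ℕ} {x₀ x : Fin n → ℝ} {r r' h : ℝ} {f : (Fin n → ℝ) → ℝ}

lemma norm_smul_single (h : ℝ) (l : Fin n) : ‖h • (Pi.single l 1 : Fin n → ℝ)‖ = |h| := by
  rw [norm_smul, Pi.norm_single, norm_one, mul_one, Real.norm_eq_abs]

lemma add_smul_single_mem_ball (hr : r + |h| < r') (hx : x ∈ closedBall x₀ r) (l : Fin n) :
    x + h • Pi.single l 1 ∈ ball x₀ r' :=
  add_mem_ball (by rwa [norm_smul_single]) hx

lemma sub_smul_single_mem_ball (hr : r + |h| < r') (hx : x ∈ closedBall x₀ r) (l : Fin n) :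
    x - h • Pi.single l 1 ∈ ball x₀ r' := by
  rw [sub_eq_add_neg, ← neg_smul]
  exact add_smul_single_mem_ball (by rwa [abs_neg]) hx l

lemma mem_ball_of_mem_closedBall (hr : r + |h| < r') (hx : x ∈ closedBall x₀ r) :
    x ∈ ball x₀ r' :=
  closedBall_subset_ball ((le_add_of_nonneg_right (abs_nonneg h)).trans_lt hr) hx

lemma continuousOn_ddq (hr : r + |h| < r') (hf : ContinuousOn f (ball x₀ r')) (l : Fin n) :
    ContinuousOn (ddq l h f) (closedBall x₀ r) :=
  (((hf.comp (by fun_prop) fun _ hx => add_smul_single_mem_ball hr hx l).sub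
    (continuousOn_const.mul (hf.mono fun _ hx => mem_ball_of_mem_closedBall hr hx))).add
      (hf.comp (by fun_prop) fun _ hx => sub_smul_single_mem_ball hr hx l)).div_const _

lemma contDiffAt_discreteLapl {N : WithTop ℕ∞} (hr : r + |h| < r') (C₁ : ℝ)
    (hf : ∀ x ∈ ball x₀ r', ContDiffAt ℝ N f x) (hx : x ∈ closedBall x₀ r) :
    ContDiffAt ℝ N (discreteLapl h C₁ f) x :=
  (ContDiffAt.sum fun l _ => contDiffAt_ddq (hf x (mem_ball_of_mem_closedBall hr hx))
    (hf _ (add_smul_single_mem_ball hr hx l)) (hf _ (sub_smul_single_mem_ball hr hx l))).add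
      contDiffAt_const

lemma grad_discreteLapl (hr : r + |h| < r') (C₁ : ℝ)
    (hf : ∀ x ∈ ball x₀ r', ContDiffAt ℝ 1 f x) (hx : x ∈ closedBall x₀ r) (m : Fin n) :
    grad (discreteLapl h C₁ f) x m = ∑ l, ddq l h (pd m f) x := by
  have h_diff {y} (hy : y ∈ ball x₀ r') : DifferentiableAt ℝ f y :=
    (hf y hy).differentiableAt one_ne_zero
  have h_mid := mem_ball_of_mem_closedBall hr hx
  have h_ddq l : DifferentiableAt ℝ (ddq l h f) x :=
    (contDiffAt_ddq (hf x h_mid) (hf _ (add_smul_single_mem_ball hr hx l))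
      (hf _ (sub_smul_single_mem_ball hr hx l))).differentiableAt one_ne_zero
  calc grad (discreteLapl h C₁ f) x m = pd m (fun y => ∑ l, ddq l h f y) x :=
        congrArg (fun L : (Fin n → ℝ) →L[ℝ] ℝ => L (Pi.single m 1))
          (fderiv_add_const (f := fun y => ∑ l, ddq l h f y) C₁)
    _ = ∑ l, pd m (ddq l h f) x := pd_sum (fun l _ => h_ddq l) m
    _ = ∑ l, ddq l h (pd m f) x := Finset.sum_congr rfl fun l _ =>
        pd_ddq (h_diff h_mid) (h_diff (add_smul_single_mem_ball hr hx l))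
          (h_diff (sub_smul_single_mem_ball hr hx l)) m

end Translations

lemma rpow_mul_pow_mul_pow_le {a b c α s : ℝ} {i j : ℕ} (ha : 0 ≤ a) (hb : 1 ≤ b) (hc : 0 ≤ c)
    (hα : 0 ≤ α) (hs : α + i + j ≤ s) : a ^ α * b ^ i * c ^ j ≤ a ^ s + b ^ s + c ^ s := by
  have : 0 ≤ b := zero_le_one.trans hb
  set m := max a (max b c) with hm
  have hm1 : 1 ≤ m := hb.trans ((le_max_left b c).trans (le_max_right a _))
  have hm0 : 0 < m := by linarith
  have h_max : m ^ s ≤ a ^ s + b ^ s + c ^ s := by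
    have ha' : 0 ≤ a ^ s := by positivity
    have hb' : 0 ≤ b ^ s := by positivity
    have hc' : 0 ≤ c ^ s := by positivity
    rcases max_choice a (max b c) with h | h
    · rw [hm, h]; linarith
    · rcases max_choice b c with h' | h' <;> rw [hm, h, h'] <;> linarith
  calc a ^ α * b ^ i * c ^ j ≤ m ^ α * m ^ i * m ^ j := by
        gcongr
        · exact le_max_left _ _
        · exact (le_max_left _ _).trans (le_max_right _ _)
        · exact (le_max_right _ _).trans (le_max_right _ _)
    _ = m ^ (α + i + j) := by
        rw [Real.rpow_add_natCast hm0.ne', Real.rpow_add_natCast hm0.ne']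
    _ ≤ m ^ s := Real.rpow_le_rpow_of_exponent_le hm1 hs
    _ ≤ a ^ s + b ^ s + c ^ s := h_max

namespace HessianMajorant

variable {n : ℕ} {G : Jet n → ℝ} {u w : (Fin n → ℝ) → ℝ} {x₀ x : Fin n → ℝ} {r r' M Λ h : ℝ}

lemma norm_jet_add_sub_le (H : HessianMajorant G u w x₀ r' M Λ) (hr : r + |h| < r')
    (hx : x ∈ closedBall x₀ r) (l : Fin n) :
    ‖jet u (x + h • Pi.single l 1) - jet u x‖
      ≤ |h| * ((1 + M) * segAvg w (h • Pi.single l 1) x) := by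
  have hr' : r + ‖h • (Pi.single l 1 : Fin n → ℝ)‖ < r' := by rwa [norm_smul_single]
  have h_mem {t : ℝ} (ht : t ∈ Icc (0 : ℝ) 1) := add_smul_mem_ball hr' hx ht
  have h_avg := norm_add_sub_le_segAvg (g := jet u) (w := fun y => |h| * (1 + M) * w y)
    (fun t ht => contDiffAt_jet (H.contDiffAt_two (h_mem ht)))
    (continuousOn_const.mul (continuousOn_comp_segment hr' H.continuousOn hx)) fun t ht => by
      rw [map_smul, norm_smul, Real.norm_eq_abs, mul_assoc]
      exact mul_le_mul_of_nonneg_left (norm_fderiv_jet_le (H.contDiffAt_two (h_mem ht)) H.nonneg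
        (H.one_le _ (h_mem ht)) (H.jet_mem _ (h_mem ht)) (H.abs_hess_le _ (h_mem ht)) l)
        (abs_nonneg h)
  exact h_avg.trans_eq (by rw [segAvg, intervalIntegral.integral_const_mul, segAvg, mul_assoc])

lemma abs_ddq_comp_jet_sub_le (H : HessianMajorant G u w x₀ r' M Λ) (hh : h ≠ 0)
    (hr : r + |h| < r') (hx : x ∈ closedBall x₀ r) (l : Fin n) :
    |ddq l h (fun y => G (jet u y)) x - (ddq l h u x * fderiv ℝ G (jet u x) (0, 1, 0)
        + ∑ m, topCoeff G (jet u x) m * ddq l h (pd m u) x)|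
      ≤ Λ * (1 + M) ^ 2 * (segAvg w (h • Pi.single l 1) x ^ 2
        + segAvg w (-h • Pi.single l 1) x ^ 2) := by
  have h_sub : ‖jet u (x - h • Pi.single l 1) - jet u x‖
      ≤ |h| * ((1 + M) * segAvg w (-h • Pi.single l 1) x) := by
    rw [sub_eq_add_neg x, ← neg_smul, ← abs_neg h]
    exact H.norm_jet_add_sub_le (by rwa [abs_neg]) hx l
  have h_taylor := H.c11.abs_ddq_comp_sub_le (J := jet u) convex_jetSet hh
    (H.jet_mem _ (mem_ball_of_mem_closedBall hr hx))
    (H.jet_mem _ (add_smul_single_mem_ball hr hx l))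
    (H.jet_mem _ (sub_smul_single_mem_ball hr hx l)) (H.norm_jet_add_sub_le hr hx l) h_sub
  rw [clm_second_difference_jet] at h_taylor
  exact h_taylor.trans_eq (by ring)

lemma abs_taylorRemainder_le (H : HessianMajorant G u w x₀ r' M Λ) (hh : h ≠ 0)
    (hr : r + |h| < r') (hx : x ∈ closedBall x₀ r) (C₁ : ℝ) :
    |taylorRemainder G u h C₁ x| ≤ Λ * |discreteLapl h C₁ u x - C₁|
      + Λ * (1 + M) ^ 2 * ∑ l, (segAvg w (h • Pi.single l 1) x ^ 2
        + segAvg w (-h • Pi.single l 1) x ^ 2) := by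
  have h_grad : topCoeff G (jet u x) ⬝ᵥ grad (discreteLapl h C₁ u) x
      = ∑ l, ∑ m, topCoeff G (jet u x) m * ddq l h (pd m u) x := by
    rw [dotProduct, Finset.sum_comm]
    refine Finset.sum_congr rfl fun m _ => ?_
    rw [grad_discreteLapl hr C₁ (fun y hy => (H.contDiffAt_two hy).of_le one_le_two) hx,
      Finset.mul_sum]
  have h_split : taylorRemainder G u h C₁ x
      = fderiv ℝ G (jet u x) (0, 1, 0) * (discreteLapl h C₁ u x - C₁)
        + ∑ l, (ddq l h (fun y => G (jet u y)) x
          - (ddq l h u x * fderiv ℝ G (jet u x) (0, 1, 0)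
            + ∑ m, topCoeff G (jet u x) m * ddq l h (pd m u) x)) := by
    rw [taylorRemainder, h_grad, discreteLapl, Finset.sum_sub_distrib, Finset.sum_add_distrib,
      ← Finset.sum_mul]
    ring
  have h_fderiv : |fderiv ℝ G (jet u x) (0, 1, 0)| ≤ Λ :=
    (H.c11.boundedLipschitzOn_fderiv (by simp [Prod.norm_def])).abs_le _
      (H.jet_mem x (mem_ball_of_mem_closedBall hr hx))
  rw [h_split, Finset.mul_sum]
  refine (abs_add_le _ _).trans (add_le_add ?_ ((Finset.abs_sum_le_sum_abs _ _).trans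
    (Finset.sum_le_sum fun l _ => H.abs_ddq_comp_jet_sub_le hh hr hx l)))
  rw [abs_mul]
  gcongr

end HessianMajorant

/-! ### Integral estimates -/

/-- The quantity `∫_{B_r} (V⁺)ˢ + ∫_{B_{r'}} wˢ` controlling all error terms. -/
noncomputable def powerEnergy {n : ℕ} (V w : (Fin n → ℝ) → ℝ) (x₀ : Fin n → ℝ)
    (r r' s : ℝ) : ℝ :=
  (∫ x in ball x₀ r, max (V x) 0 ^ s) + ∫ x in ball x₀ r', w x ^ s

lemma posPart_rpow_mul_abs_sub_le {V C M q : ℝ} (hq : 1 < q) (hC : 0 ≤ C) (hCM : C ≤ M) :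
    max V 0 ^ (q - 1) * |V - C| ≤ (1 + M) * (max V 0 ^ (q - 1) * max V 0 + max V 0 ^ (q - 1)) := by
  rcases le_or_gt V 0 with hV | hV
  · simp [max_eq_right hV, Real.zero_rpow (sub_pos.2 hq).ne']
  · have h_abs : |V - C| ≤ (1 + M) * (V + 1) := abs_le.2 ⟨by nlinarith, by nlinarith⟩
    rw [max_eq_left hV.le]
    calc V ^ (q - 1) * |V - C| ≤ V ^ (q - 1) * ((1 + M) * (V + 1)) := by gcongr
      _ = (1 + M) * (V ^ (q - 1) * V + V ^ (q - 1)) := by ring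

lemma posPart_rpow_mul_pow_mul_abs_sub_le {V C M w q s : ℝ} {m : ℕ} (hw : 1 ≤ w) (hq : 1 < q)
    (hC : 0 ≤ C) (hCM : C ≤ M) (hs : q - 1 + m + 2 ≤ s) :
    max V 0 ^ (q - 1) * w ^ m * |V - C| ≤ (1 + M) ^ 2 * (4 * (max V 0 ^ s + w ^ s)) := by
  have hw0 := zero_le_one.trans hw
  have h_young (j : ℕ) (hj : j ≤ 2) :
      max V 0 ^ (q - 1) * w ^ m * max V 0 ^ j ≤ 2 * (max V 0 ^ s + w ^ s) := by
    have hj' : (j : ℝ) ≤ 2 := by exact_mod_cast hj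
    have h := rpow_mul_pow_mul_pow_le (i := m) (le_max_right V 0) hw (le_max_right V 0)
      (sub_nonneg.2 hq.le) (show q - 1 + m + j ≤ s by linarith)
    linarith [Real.rpow_nonneg hw0 s]
  calc max V 0 ^ (q - 1) * w ^ m * |V - C| = w ^ m * (max V 0 ^ (q - 1) * |V - C|) := by ring
    _ ≤ w ^ m * ((1 + M) * (max V 0 ^ (q - 1) * max V 0 + max V 0 ^ (q - 1))) :=
        mul_le_mul_of_nonneg_left (posPart_rpow_mul_abs_sub_le hq hC hCM) (by positivity)
    _ = (1 + M) * (max V 0 ^ (q - 1) * w ^ m * max V 0 ^ 1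
          + max V 0 ^ (q - 1) * w ^ m * max V 0 ^ 0) := by ring
    _ ≤ (1 + M) ^ 2 * (2 * (max V 0 ^ s + w ^ s) + 2 * (max V 0 ^ s + w ^ s)) := by
        gcongr ?_ * (?_ + ?_)
        exacts [le_self_pow₀ (by linarith) two_ne_zero, h_young 1 one_le_two, h_young 0 zero_le_two]
    _ = (1 + M) ^ 2 * (4 * (max V 0 ^ s + w ^ s)) := by ring

section PowerEnergy

variable {n : ℕ} {V w : (Fin n → ℝ) → ℝ} {x₀ : Fin n → ℝ} {r r' q s : ℝ}

lemma setIntegral_rpow_le (hr : r ≤ r') (hs : 0 ≤ s) (hw : ContinuousOn w (closedBall x₀ r'))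
    (hw0 : ∀ x ∈ ball x₀ r', 0 ≤ w x) :
    ∫ x in ball x₀ r, w x ^ s ≤ ∫ x in ball x₀ r', w x ^ s :=
  setIntegral_mono_set (integrableOn_ball (hw.rpow_const fun _ _ => Or.inr hs))
    ((ae_restrict_iff' measurableSet_ball).2 (.of_forall fun x hx => Real.rpow_nonneg (hw0 x hx) s))
    (ball_subset_ball hr).eventuallyLE

lemma powerEnergy_nonneg (hw0 : ∀ x ∈ ball x₀ r', 0 ≤ w x) : 0 ≤ powerEnergy V w x₀ r r' s :=
  add_nonneg (setIntegral_nonneg measurableSet_ball fun _ _ => by positivity)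
    (setIntegral_nonneg measurableSet_ball fun x hx => Real.rpow_nonneg (hw0 x hx) s)

lemma setIntegral_posPart_rpow_mul_pow_le (hr : r ≤ r') (hq : 0 ≤ q) {m : ℕ} (hs : q + m ≤ s)
    (hV : ContinuousOn V (closedBall x₀ r)) (hw : ContinuousOn w (closedBall x₀ r'))
    (hw1 : ∀ x ∈ ball x₀ r', 1 ≤ w x) :
    ∫ x in ball x₀ r, max (V x) 0 ^ q * w x ^ m ≤ 2 * powerEnergy V w x₀ r r' s := by
  have hs0 : 0 ≤ s := by linarith [m.cast_nonneg (α := ℝ)]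
  have hw_r := hw.mono (closedBall_subset_closedBall hr)
  have hw0 : ∀ x ∈ ball x₀ r', 0 ≤ w x := fun x hx => zero_le_one.trans (hw1 x hx)
  have h_pos : ContinuousOn (fun x => max (V x) 0 ^ s) (closedBall x₀ r) :=
    (continuous_posPart_rpow hs0).comp_continuousOn hV
  have h_rpow : ContinuousOn (fun x => w x ^ s) (closedBall x₀ r) :=
    hw_r.rpow_const fun _ _ => Or.inr hs0
  have h_young : ∀ x ∈ ball x₀ r, max (V x) 0 ^ q * w x ^ m
      ≤ 2 * (max (V x) 0 ^ s + w x ^ s) := fun x hx => by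
    have hx1 := hw1 x (ball_subset_ball hr hx)
    have h := rpow_mul_pow_mul_pow_le (j := 0) (le_max_right (V x) 0) hx1 (le_max_right (V x) 0)
      hq (by simpa using hs)
    have : 0 ≤ w x ^ s := Real.rpow_nonneg (zero_le_one.trans hx1) s
    linarith
  calc ∫ x in ball x₀ r, max (V x) 0 ^ q * w x ^ m
      ≤ ∫ x in ball x₀ r, 2 * (max (V x) 0 ^ s + w x ^ s) := setIntegral_mono_on
        (integrableOn_ball (((continuous_posPart_rpow hq).comp_continuousOn hV).mul (hw_r.pow m)))
        (integrableOn_ball (continuousOn_const.mul (h_pos.add h_rpow))) measurableSet_ball h_young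
    _ = 2 * ((∫ x in ball x₀ r, max (V x) 0 ^ s) + ∫ x in ball x₀ r, w x ^ s) := by
        rw [integral_const_mul, integral_add (integrableOn_ball h_pos) (integrableOn_ball h_rpow)]
    _ ≤ 2 * powerEnergy V w x₀ r r' s := by
        rw [powerEnergy]
        exact mul_le_mul_of_nonneg_left
          (add_le_add_right (setIntegral_rpow_le hr hs0 hw hw0) _) zero_le_two

end PowerEnergy

namespace HessianMajorant

variable {n : ℕ} {G : Jet n → ℝ} {η u w : (Fin n → ℝ) → ℝ} {x₀ x : Fin n → ℝ}
  {r r' M Λ c h q s C₁ : ℝ} {m : ℕ}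

lemma contDiffAt_discreteLapl (H : HessianMajorant G u w x₀ r' M Λ) (hr : r + |h| < r') (C₁ : ℝ)
    (hx : x ∈ closedBall x₀ r) : ContDiffAt ℝ 1 (discreteLapl h C₁ u) x :=
  _root_.contDiffAt_discreteLapl hr C₁
    (fun _ hy => (H.contDiffAt_two hy).of_le one_le_two) hx

lemma continuousOn_discreteLapl (H : HessianMajorant G u w x₀ r' M Λ) (hr : r + |h| < r')
    (C₁ : ℝ) : ContinuousOn (discreteLapl h C₁ u) (closedBall x₀ r) :=
  continuousOn_of_contDiffAt fun _ hx => H.contDiffAt_discreteLapl hr C₁ hx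

lemma posPart_rpow_mul_pow_mul_segAvg_sq_le (H : HessianMajorant G u w x₀ r' M Λ)
    {v : Fin n → ℝ} (hr : r + ‖v‖ < r') (hx : x ∈ closedBall x₀ r) {a : ℝ} (ha : 0 ≤ a)
    (hq : 1 < q) (hs : q - 1 + m + 2 ≤ s) :
    a ^ (q - 1) * w x ^ m * segAvg w v x ^ 2
      ≤ a ^ s + w x ^ s + segAvg (fun y => w y ^ s) v x := by
  have hw0 {t : ℝ} (ht : t ∈ Icc (0 : ℝ) 1) : 0 ≤ w (x + t • v) :=
    zero_le_one.trans (H.one_le _ (add_smul_mem_ball hr hx ht))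
  have hx' : x ∈ ball x₀ r' :=
    closedBall_subset_ball ((le_add_of_nonneg_right (norm_nonneg v)).trans_lt hr) hx
  have h_young := rpow_mul_pow_mul_pow_le (i := m) (j := 2) ha (H.one_le x hx')
    (segAvg_nonneg fun t ht => hw0 ht) (sub_nonneg.2 hq.le) (by exact_mod_cast hs)
  have h_jensen := rpow_segAvg_le (s := s) (by linarith [m.cast_nonneg (α := ℝ)])
    (continuousOn_comp_segment hr H.continuousOn hx) fun t ht => hw0 ht
  linarith

lemma posPart_rpow_mul_pow_mul_abs_taylorRemainder_le (H : HessianMajorant G u w x₀ r' M Λ)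
    (hh : h ≠ 0) (hr : r + |h| < r') (hx : x ∈ closedBall x₀ r) (hC : 0 ≤ C₁) (hCM : C₁ ≤ M)
    (hq : 1 < q) (hs : q - 1 + m + 2 ≤ s) :
    max (discreteLapl h C₁ u x) 0 ^ (q - 1) * w x ^ m * |taylorRemainder G u h C₁ x|
      ≤ Λ * (1 + M) ^ 2 * ((4 + 2 * n) * (max (discreteLapl h C₁ u x) 0 ^ s + w x ^ s)
        + ∑ l, (segAvg (fun y => w y ^ s) (h • Pi.single l 1) x
          + segAvg (fun y => w y ^ s) (-h • Pi.single l 1) x)) := by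
  have hM := H.nonneg
  have hΛ := H.c11.nonneg
  have hw := H.one_le x (mem_ball_of_mem_closedBall hr hx)
  have : 0 ≤ w x := zero_le_one.trans hw
  set V := discreteLapl h C₁ u x
  set a := max V 0
  have ha : 0 ≤ a := le_max_right V 0
  have h_first := posPart_rpow_mul_pow_mul_abs_sub_le (V := V) hw hq hC hCM hs
  have h_second (l : Fin n) := add_le_add
    (H.posPart_rpow_mul_pow_mul_segAvg_sq_le (v := h • Pi.single l 1)
      (by rwa [norm_smul_single]) hx ha hq hs)
    (H.posPart_rpow_mul_pow_mul_segAvg_sq_le (v := -h • Pi.single l 1)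
      (by rwa [norm_smul_single, abs_neg]) hx ha hq hs)
  calc a ^ (q - 1) * w x ^ m * |taylorRemainder G u h C₁ x|
      ≤ a ^ (q - 1) * w x ^ m * (Λ * |V - C₁| + Λ * (1 + M) ^ 2 * ∑ l,
        (segAvg w (h • Pi.single l 1) x ^ 2 + segAvg w (-h • Pi.single l 1) x ^ 2)) := by
        gcongr
        exact H.abs_taylorRemainder_le hh hr hx C₁
    _ = Λ * (a ^ (q - 1) * w x ^ m * |V - C₁|) + Λ * (1 + M) ^ 2 * ∑ l,
        (a ^ (q - 1) * w x ^ m * segAvg w (h • Pi.single l 1) x ^ 2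
          + a ^ (q - 1) * w x ^ m * segAvg w (-h • Pi.single l 1) x ^ 2) := by
        simp only [← mul_add, ← Finset.mul_sum]
        ring
    _ ≤ Λ * ((1 + M) ^ 2 * (4 * (a ^ s + w x ^ s))) + Λ * (1 + M) ^ 2 * ∑ l,
        ((a ^ s + w x ^ s + segAvg (fun y => w y ^ s) (h • Pi.single l 1) x)
          + (a ^ s + w x ^ s + segAvg (fun y => w y ^ s) (-h • Pi.single l 1) x)) := by
        gcongr ?_ + ?_
        · exact mul_le_mul_of_nonneg_left h_first hΛ
        · exact mul_le_mul_of_nonneg_left (Finset.sum_le_sum fun l _ => h_second l) (by positivity)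
    _ = _ := by
        simp only [Finset.sum_add_distrib, Finset.sum_const, Finset.card_univ, Fintype.card_fin,
          nsmul_eq_mul]
        ring

lemma integral_sum_segAvg_le (H : HessianMajorant G u w x₀ r' M Λ) (hr : r + |h| < r')
    (hs : 0 ≤ s) :
    IntegrableOn (fun x => ∑ l, (segAvg (fun y => w y ^ s) (h • Pi.single l 1) x
        + segAvg (fun y => w y ^ s) (-h • Pi.single l 1) x)) (ball x₀ r) ∧
      ∫ x in ball x₀ r, ∑ l, (segAvg (fun y => w y ^ s) (h • Pi.single l 1) x
        + segAvg (fun y => w y ^ s) (-h • Pi.single l 1) x)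
      ≤ 2 * n * ∫ x in ball x₀ r', w x ^ s := by
  have h_rpow : ContinuousOn (fun y => w y ^ s) (closedBall x₀ r') :=
    H.continuousOn.rpow_const fun _ _ => Or.inr hs
  have h_nonneg : ∀ x ∈ ball x₀ r', 0 ≤ w x ^ s := fun x hx =>
    Real.rpow_nonneg (zero_le_one.trans (H.one_le x hx)) s
  have h_right (l : Fin n) : r + ‖h • (Pi.single l 1 : Fin n → ℝ)‖ < r' := by
    rwa [norm_smul_single]
  have h_left (l : Fin n) : r + ‖-h • (Pi.single l 1 : Fin n → ℝ)‖ < r' := by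
    rwa [norm_smul_single, abs_neg]
  have h_int (l : Fin n) := (integrableOn_segAvg (h_right l) h_rpow).fun_add
    (integrableOn_segAvg (h_left l) h_rpow)
  refine ⟨integrable_finsetSum _ fun l _ => h_int l, ?_⟩
  rw [integral_finsetSum _ fun l _ => h_int l]
  calc _ ≤ ∑ _l : Fin n, ((∫ x in ball x₀ r', w x ^ s) + ∫ x in ball x₀ r', w x ^ s) :=
        Finset.sum_le_sum fun l _ => by
          rw [integral_add (integrableOn_segAvg (h_right l) h_rpow)
            (integrableOn_segAvg (h_left l) h_rpow)]
          exact add_le_add (setIntegral_segAvg_le (h_right l) h_rpow h_nonneg)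
            (setIntegral_segAvg_le (h_left l) h_rpow h_nonneg)
    _ = _ := by simp; ring

lemma abs_cutoff_mul_esymmMat_mul_taylorRemainder_le (H : HessianMajorant G u w x₀ r' M Λ)
    (hη : IsCutoff η x₀ r c) (hh : h ≠ 0) (hr : r + |h| < r') (hx : x ∈ closedBall x₀ r)
    (hC : 0 ≤ C₁) (hCM : C₁ ≤ M) (hq : 1 < q) (hm : m ≤ n) (hs : q - 1 + m + 2 ≤ s) :
    |η x * max (discreteLapl h C₁ u x) 0 ^ (q - 1)
        * (esymmMat m (augHess G u x) * taylorRemainder G u h C₁ x)|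
      ≤ newtonConst n M Λ * (Λ * (1 + M) ^ 2
        * ((4 + 2 * n) * (max (discreteLapl h C₁ u x) 0 ^ s + w x ^ s)
          + ∑ l, (segAvg (fun y => w y ^ s) (h • Pi.single l 1) x
            + segAvg (fun y => w y ^ s) (-h • Pi.single l 1) x))) := by
  have hM := H.nonneg
  have hΛ := H.c11.nonneg
  have hκ : 0 ≤ newtonConst n M Λ := by rw [newtonConst]; positivity
  rw [abs_mul, abs_mul, abs_mul, abs_of_nonneg (hη.nonneg x),
    abs_of_nonneg (Real.rpow_nonneg (le_max_right _ 0) _)]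
  calc _ ≤ 1 * max (discreteLapl h C₁ u x) 0 ^ (q - 1)
        * (newtonConst n M Λ * w x ^ m * |taylorRemainder G u h C₁ x|) := by
        gcongr
        exacts [hη.le_one x, (H.abs_esymmMat_and_newtonT_le
          (mem_ball_of_mem_closedBall hr hx) hm).1]
    _ = newtonConst n M Λ * (max (discreteLapl h C₁ u x) 0 ^ (q - 1) * w x ^ m
        * |taylorRemainder G u h C₁ x|) := by ring
    _ ≤ _ := mul_le_mul_of_nonneg_left
      (H.posPart_rpow_mul_pow_mul_abs_taylorRemainder_le hh hr hx hC hCM hq hs) hκ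

lemma abs_integral_esymmMat_mul_taylorRemainder_le (H : HessianMajorant G u w x₀ r' M Λ)
    (hη : IsCutoff η x₀ r c) (hh : h ≠ 0) (hr : r + |h| < r') (hC : 0 ≤ C₁) (hCM : C₁ ≤ M)
    (hq : 1 < q) (hm : m ≤ n) (hs : q - 1 + m + 2 ≤ s) :
    |∫ x in ball x₀ r, η x * max (discreteLapl h C₁ u x) 0 ^ (q - 1)
        * (esymmMat m (augHess G u x) * taylorRemainder G u h C₁ x)|
      ≤ newtonConst n M Λ * (Λ * (1 + M) ^ 2 * (4 + 4 * n))
        * powerEnergy (discreteLapl h C₁ u) w x₀ r r' s := by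
  have hM := H.nonneg
  have hΛ := H.c11.nonneg
  have hs0 : 0 ≤ s := by linarith [m.cast_nonneg (α := ℝ)]
  have hr' : r ≤ r' := by linarith [abs_nonneg h]
  have hκ : 0 ≤ newtonConst n M Λ := by rw [newtonConst]; positivity
  have h_pos : IntegrableOn (fun x => max (discreteLapl h C₁ u x) 0 ^ s) (ball x₀ r) :=
    integrableOn_ball ((continuous_posPart_rpow hs0).comp_continuousOn
      (H.continuousOn_discreteLapl hr C₁))
  have h_rpow : IntegrableOn (fun x => w x ^ s) (ball x₀ r) := integrableOn_ball
    ((H.continuousOn.mono (closedBall_subset_closedBall hr')).rpow_const fun _ _ => Or.inr hs0)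
  obtain ⟨h_int, h_le⟩ := H.integral_sum_segAvg_le hr hs0
  refine (norm_integral_le_of_norm_le (G := ℝ) (((((h_pos.fun_add h_rpow).const_mul
    (4 + 2 * n)).fun_add h_int).const_mul (Λ * (1 + M) ^ 2)).const_mul (newtonConst n M Λ))
    ((ae_restrict_iff' measurableSet_ball).2 (.of_forall fun x hx =>
      H.abs_cutoff_mul_esymmMat_mul_taylorRemainder_le hη hh hr (ball_subset_closedBall hx) hC hCM
        hq hm hs))).trans ?_
  rw [integral_const_mul, integral_const_mul,
    integral_add ((h_pos.fun_add h_rpow).const_mul _) h_int, integral_const_mul,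
    integral_add h_pos h_rpow, mul_assoc (newtonConst n M Λ), mul_assoc (Λ * (1 + M) ^ 2)]
  have h_mono := setIntegral_rpow_le hr' hs0 H.continuousOn
    fun x hx => zero_le_one.trans (H.one_le x hx)
  have h_pos_nonneg : 0 ≤ ∫ x in ball x₀ r, max (discreteLapl h C₁ u x) 0 ^ s :=
    setIntegral_nonneg measurableSet_ball fun _ _ => by positivity
  rw [powerEnergy]
  gcongr
  nlinarith [n.cast_nonneg (α := ℝ)]

lemma abs_integral_dotProduct_grad_vecMul_newtonT_le (H : HessianMajorant G u w x₀ r' M Λ)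
    (hη : IsCutoff η x₀ r c) (hc : 0 ≤ c) (hr0 : 0 < r) (hr : r + |h| < r') (hq : 1 < q)
    (hm : m ≤ n) (hs : q + (m + 1) ≤ s) {B : Jet n → Fin n → ℝ} {K : ℝ} (hK : 0 ≤ K)
    (hB : ∀ i, BoundedLipschitzOn (fun P => B P i) (jetSet x₀ r' M) K) :
    |∫ x in ball x₀ r, η x * max (discreteLapl h C₁ u x) 0 ^ (q - 1)
        * (B (jet u x) ⬝ᵥ (grad (discreteLapl h C₁ u) x ᵥ* newtonT m (augHess G u x)))|
      ≤ n * (newtonConst n M Λ * (K * (1 + M)) * (n * (1 + c) + 1))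
        * (2 * powerEnergy (discreteLapl h C₁ u) w x₀ r r' s) := by
  have hM := H.nonneg
  have hΛ := H.c11.nonneg
  have hr' : r ≤ r' := by linarith [abs_nonneg h]
  have h_mem {x} (hx : x ∈ closedBall x₀ r) : x ∈ ball x₀ r' := mem_ball_of_mem_closedBall hr hx
  have h_mem' {x} (hx : x ∈ ball x₀ r) : x ∈ ball x₀ r' := ball_subset_ball hr' hx
  have h_parts := hη.abs_integral_dotProduct_grad_vecMul_le hr0 hq
    (fun x hx => H.contDiffAt_discreteLapl hr C₁ hx)
    (fun x hx => contDiffAt_newtonT (H.contDiffAt_augHess (h_mem hx)) hm)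
    (H.continuousOn.mono (closedBall_subset_closedBall hr')) (fun x hx => H.one_le x (h_mem' hx))
    (fun i => (hB i).isLipschitzCoeff hM (fun x hx => H.contDiffAt_two (h_mem hx))
      (fun x hx => H.jet_mem x (h_mem hx)) (fun x hx => H.one_le x (h_mem' hx))
      fun x hx => H.abs_hess_le x (h_mem' hx))
    (fun x hx => (H.abs_esymmMat_and_newtonT_le (h_mem' hx) hm).2)
    (fun x hx => H.abs_matDiv_newtonT_le (h_mem' hx) hm)
  refine h_parts.trans (mul_le_mul_of_nonneg_left (setIntegral_posPart_rpow_mul_pow_le hr'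
    (by linarith) (by exact_mod_cast hs) (H.continuousOn_discreteLapl hr C₁) H.continuousOn
      H.one_le) ?_)
  rw [newtonConst]
  positivity

end HessianMajorant

/-! ### Cancellation of the leading terms -/

section Cancellation

variable {n : ℕ} {A : Matrix (Fin n) (Fin n) ℝ}

lemma add_vecMul_vecMul_newtonT_dotProduct (hA : Aᵀ = A) (m : ℕ) (β b v : Fin n → ℝ) :
    ((β + b ᵥ* A) ᵥ* newtonT m A) ⬝ᵥ v
      = β ⬝ᵥ (v ᵥ* newtonT m A) - b ⬝ᵥ (v ᵥ* newtonT (m + 1) A)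
        + esymmMat (m + 1) A * (b ⬝ᵥ v) := by
  have h_symm (j : ℕ) : v ᵥ* newtonT j A = newtonT j A *ᵥ v := by
    rw [← mulVec_transpose, newtonT_transpose hA]
  rw [add_vecMul, vecMul_vecMul, ← newtonT_mul_comm, newtonT_mul_self, vecMul_sub, vecMul_smul,
    vecMul_one, add_dotProduct, sub_dotProduct, smul_dotProduct, smul_eq_mul, h_symm, h_symm,
    dotProduct_mulVec, dotProduct_mulVec]
  ring

lemma sum_newtonT_mul_ddq_smul_one {m : ℕ} (hm : m ≤ n) (l : Fin n) (h : ℝ)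
    (φ : (Fin n → ℝ) → ℝ) (x : Fin n → ℝ) :
    ∑ i, ∑ j, newtonT m A i j * ddq l h (fun y => (φ y • (1 : Matrix (Fin n) (Fin n) ℝ)) i j) x
      = (n - m) * (esymmMat m A * ddq l h φ x) := by
  have h_entry (i j : Fin n) : ddq l h (fun y => (φ y • (1 : Matrix (Fin n) (Fin n) ℝ)) i j) x
      = if i = j then ddq l h φ x else 0 := by
    simp only [ddq, Matrix.smul_apply, one_apply]
    split_ifs <;> simp
  simp only [h_entry, mul_ite, mul_zero, Finset.sum_ite_eq, Finset.mem_univ, if_true]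
  rw [← Finset.sum_mul, ← mul_assoc, ← trace_newtonT hm]
  rfl

end Cancellation

namespace HessianMajorant

variable {n : ℕ} {G : Jet n → ℝ} {η u w : (Fin n → ℝ) → ℝ} {x₀ x : Fin n → ℝ}
  {r r' M Λ c h q C₁ : ℝ} {p : ℕ}

lemma matDiv_newtonT_dotProduct_add (H : HessianMajorant G u w x₀ r' M Λ)
    (hx : x ∈ ball x₀ r') (hp : p < n) (h C₁ : ℝ) :
    matDiv (fun y => newtonT (p + 1) (augHess G u y)) x ⬝ᵥ grad (discreteLapl h C₁ u) x
        + ∑ l, ∑ i, ∑ j, newtonT (p + 1) (augHess G u x) i j *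
          ddq l h (fun y => (G (jet u y) • (1 : Matrix (Fin n) (Fin n) ℝ)) i j) x
      = (n - (p + 1)) *
        (topCoeff G (jet u x) ⬝ᵥ
            (grad (discreteLapl h C₁ u) x ᵥ* newtonT (p + 1) (augHess G u x))
          - lowerCoeff G (jet u x) ⬝ᵥ (grad (discreteLapl h C₁ u) x ᵥ* newtonT p (augHess G u x))
          + esymmMat (p + 1) (augHess G u x) * taylorRemainder G u h C₁ x) := by
  have h_grad := grad_comp_jet (H.contDiffAt_two hx) (H.c11.contDiffAt _ (H.jet_mem x hx))
  rw [H.matDiv_newtonT hx hp, smul_dotProduct, smul_eq_mul, h_grad,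
    add_vecMul_vecMul_newtonT_dotProduct (H.augHess_transpose hx),
    Finset.sum_congr rfl fun l _ => sum_newtonT_mul_ddq_smul_one hp l h (fun y => G (jet u y)) x,
    ← Finset.mul_sum, ← Finset.mul_sum, taylorRemainder]
  push_cast
  ring

lemma integrableOn_cutoff_mul (H : HessianMajorant G u w x₀ r' M Λ) (hη : IsCutoff η x₀ r c)
    (hr : r + |h| < r') (hq : 1 < q) {f : (Fin n → ℝ) → ℝ}
    (hf : ContinuousOn f (closedBall x₀ r)) :
    IntegrableOn (fun x => η x * max (discreteLapl h C₁ u x) 0 ^ (q - 1) * f x) (ball x₀ r) :=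
  integrableOn_ball ((hη.contDiff.continuous.continuousOn.mul
    ((continuous_posPart_rpow (sub_nonneg.2 hq.le)).comp_continuousOn
      (H.continuousOn_discreteLapl hr C₁))).mul hf)

lemma continuousOn_newtonT (H : HessianMajorant G u w x₀ r' M Λ) (hr : r + |h| < r')
    (hp : p ≤ n) (i j : Fin n) :
    ContinuousOn (fun x => newtonT p (augHess G u x) i j) (closedBall x₀ r) :=
  continuousOn_of_contDiffAt fun _ hx =>
    contDiffAt_newtonT (H.contDiffAt_augHess (mem_ball_of_mem_closedBall hr hx)) hp i j

lemma continuousOn_grad_discreteLapl (H : HessianMajorant G u w x₀ r' M Λ) (hr : r + |h| < r')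
    (j : Fin n) :
    ContinuousOn (fun x => grad (discreteLapl h C₁ u) x j) (closedBall x₀ r) :=
  continuousOn_pd (fun _ hx => H.contDiffAt_discreteLapl hr C₁ hx) j

lemma continuousOn_comp_jet (H : HessianMajorant G u w x₀ r' M Λ) (hr : r + |h| < r') {K : ℝ}
    {b : Jet n → ℝ} (hb : BoundedLipschitzOn b (jetSet x₀ r' M) K) :
    ContinuousOn (fun x => b (jet u x)) (closedBall x₀ r) :=
  hb.lipschitzOnWith.continuousOn.comp (continuousOn_of_contDiffAt fun _ hx =>
    contDiffAt_jet (H.contDiffAt_two (mem_ball_of_mem_closedBall hr hx)))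
    fun _ hx => H.jet_mem _ (mem_ball_of_mem_closedBall hr hx)

lemma continuousOn_ddq_lower (H : HessianMajorant G u w x₀ r' M Λ) (hr : r + |h| < r')
    (l : Fin n) : ContinuousOn (ddq l h fun y => G (jet u y)) (closedBall x₀ r) :=
  continuousOn_ddq hr (continuousOn_of_contDiffAt fun _ hx => H.contDiffAt_lower hx) l

lemma continuousOn_dotProduct_grad_vecMul_newtonT (H : HessianMajorant G u w x₀ r' M Λ)
    (hr : r + |h| < r') (hp : p ≤ n) {B : Jet n → Fin n → ℝ} {K : ℝ}
    (hB : ∀ i, BoundedLipschitzOn (fun P => B P i) (jetSet x₀ r' M) K) :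
    ContinuousOn (fun x => B (jet u x) ⬝ᵥ
      (grad (discreteLapl h C₁ u) x ᵥ* newtonT p (augHess G u x))) (closedBall x₀ r) :=
  continuousOn_finsetSum _ fun i _ => (H.continuousOn_comp_jet hr (hB i)).mul
    (continuousOn_finsetSum Finset.univ fun j _ =>
      (H.continuousOn_grad_discreteLapl (C₁ := C₁) hr j).mul (H.continuousOn_newtonT hr hp j i))

lemma continuousOn_esymmMat_mul_taylorRemainder (H : HessianMajorant G u w x₀ r' M Λ)
    (hr : r + |h| < r') (hp : p ≤ n) :
    ContinuousOn (fun x => esymmMat p (augHess G u x) * taylorRemainder G u h C₁ x)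
      (closedBall x₀ r) :=
  (continuousOn_of_contDiffAt fun _ hx => contDiffAt_esymmMat
    (H.contDiffAt_augHess (mem_ball_of_mem_closedBall hr hx)) hp).mul
  ((continuousOn_finsetSum _ fun l _ => H.continuousOn_ddq_lower hr l).sub
    (continuousOn_finsetSum _ fun i _ =>
      (H.continuousOn_comp_jet hr (boundedLipschitzOn_topCoeff H.c11 i)).mul
        (H.continuousOn_grad_discreteLapl hr i)))

end HessianMajorant

/-! ### The cancellation estimate -/

/-- The constant of the cancellation estimate, up to the factor `1 + c` coming from the gradient
bound `c` of the cutoff function. -/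
def cancellationConst (n : ℕ) (M Λ : ℝ) : ℝ :=
  n * (newtonConst n M Λ * (n * (n + 1) * 2 * (1 + M) *
    (Λ + (Λ + 2 * (1 + M) * Λ + 2 * Λ * Λ)) + Λ * (1 + M) ^ 2 * (4 + 4 * n)))

lemma cancellationConst_nonneg {n : ℕ} {M Λ : ℝ} (hM : 0 ≤ M) (hΛ : 0 ≤ Λ) :
    0 ≤ cancellationConst n M Λ := by
  rw [cancellationConst, newtonConst]
  positivity

namespace HessianMajorant

variable {n : ℕ} {G : Jet n → ℝ} {η u w : (Fin n → ℝ) → ℝ} {x₀ : Fin n → ℝ}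
  {r r' M Λ c h q C₁ : ℝ} {p : ℕ}

lemma continuousOn_matDiv_newtonT_dotProduct (H : HessianMajorant G u w x₀ r' M Λ)
    (hr : r + |h| < r') (hp : p ≤ n) :
    ContinuousOn (fun x => matDiv (fun y => newtonT p (augHess G u y)) x
      ⬝ᵥ grad (discreteLapl h C₁ u) x) (closedBall x₀ r) :=
  continuousOn_finsetSum _ fun j _ => (continuousOn_finsetSum _ fun i _ =>
    continuousOn_pd (fun _ hx => contDiffAt_newtonT
      (H.contDiffAt_augHess (mem_ball_of_mem_closedBall hr hx)) hp i j) i).mul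
    (H.continuousOn_grad_discreteLapl hr j)

lemma continuousOn_sum_newtonT_mul_ddq (H : HessianMajorant G u w x₀ r' M Λ)
    (hr : r + |h| < r') (hp : p ≤ n) (l : Fin n) :
    ContinuousOn (fun x => ∑ i, ∑ j, newtonT p (augHess G u x) i j *
      ddq l h (fun y => (G (jet u y) • (1 : Matrix (Fin n) (Fin n) ℝ)) i j) x)
      (closedBall x₀ r) := by
  simp only [sum_newtonT_mul_ddq_smul_one hp]
  exact continuousOn_const.mul ((continuousOn_of_contDiffAt fun _ hx => contDiffAt_esymmMat
    (H.contDiffAt_augHess (mem_ball_of_mem_closedBall hr hx)) hp).mul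
      (H.continuousOn_ddq_lower hr l))

lemma integral_matDiv_newtonT_add (H : HessianMajorant G u w x₀ r' M Λ) (hη : IsCutoff η x₀ r c)
    (hr : r + |h| < r') (hq : 1 < q) (hp : p < n) :
    (∫ x in ball x₀ r, η x * max (discreteLapl h C₁ u x) 0 ^ (q - 1) *
        (matDiv (fun y => newtonT (p + 1) (augHess G u y)) x ⬝ᵥ grad (discreteLapl h C₁ u) x))
      + ∑ l, ∫ x in ball x₀ r, η x * max (discreteLapl h C₁ u x) 0 ^ (q - 1) *
        ∑ i, ∑ j, newtonT (p + 1) (augHess G u x) i j *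
          ddq l h (fun y => (G (jet u y) • (1 : Matrix (Fin n) (Fin n) ℝ)) i j) x
      = (n - (p + 1)) *
        ((∫ x in ball x₀ r, η x * max (discreteLapl h C₁ u x) 0 ^ (q - 1) *
            (topCoeff G (jet u x) ⬝ᵥ
              (grad (discreteLapl h C₁ u) x ᵥ* newtonT (p + 1) (augHess G u x))))
          - (∫ x in ball x₀ r, η x * max (discreteLapl h C₁ u x) 0 ^ (q - 1) *
            (lowerCoeff G (jet u x) ⬝ᵥ
              (grad (discreteLapl h C₁ u) x ᵥ* newtonT p (augHess G u x))))
          + ∫ x in ball x₀ r, η x * max (discreteLapl h C₁ u x) 0 ^ (q - 1) *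
            (esymmMat (p + 1) (augHess G u x) * taylorRemainder G u h C₁ x)) := by
  have hp' : p + 1 ≤ n := hp
  have h_int {f : (Fin n → ℝ) → ℝ} (hf : ContinuousOn f (closedBall x₀ r)) :=
    H.integrableOn_cutoff_mul (C₁ := C₁) hη hr hq hf
  have h_ddq (l : Fin n) := h_int (H.continuousOn_sum_newtonT_mul_ddq hr hp' l)
  have h_top := h_int (H.continuousOn_dotProduct_grad_vecMul_newtonT (C₁ := C₁) hr hp'
    (boundedLipschitzOn_topCoeff H.c11))
  have h_lower := h_int (H.continuousOn_dotProduct_grad_vecMul_newtonT (C₁ := C₁) hr hp.le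
    (boundedLipschitzOn_lowerCoeff H.nonneg H.c11))
  rw [← integral_finsetSum _ fun l _ => h_ddq l,
    ← integral_add (h_int (H.continuousOn_matDiv_newtonT_dotProduct hr hp'))
      (integrable_finsetSum _ fun l _ => h_ddq l),
    ← integral_sub h_top h_lower, ← integral_add (h_top.fun_sub h_lower)
      (h_int (H.continuousOn_esymmMat_mul_taylorRemainder hr hp')), ← integral_const_mul]
  refine setIntegral_congr_fun measurableSet_ball fun x hx => ?_
  have hr' : r ≤ r' := by linarith [abs_nonneg h]
  rw [← Finset.mul_sum, ← mul_add, H.matDiv_newtonT_dotProduct_add (ball_subset_ball hr' hx) hp]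
  ring

lemma abs_integral_matDiv_newtonT_add_le (H : HessianMajorant G u w x₀ r' M Λ)
    (hη : IsCutoff η x₀ r c) (hc : 0 ≤ c) (hh : h ≠ 0) (hr0 : 0 < r) (hr : r + |h| < r')
    (hC : 0 ≤ C₁) (hCM : C₁ ≤ M) (hq : 1 < q) (hp : p < n) :
    |(∫ x in ball x₀ r, η x * max (discreteLapl h C₁ u x) 0 ^ (q - 1) *
        (matDiv (fun y => newtonT (p + 1) (augHess G u y)) x ⬝ᵥ grad (discreteLapl h C₁ u) x))
      + ∑ l, ∫ x in ball x₀ r, η x * max (discreteLapl h C₁ u x) 0 ^ (q - 1) *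
        ∑ i, ∑ j, newtonT (p + 1) (augHess G u x) i j *
          ddq l h (fun y => (G (jet u y) • (1 : Matrix (Fin n) (Fin n) ℝ)) i j) x|
      ≤ cancellationConst n M Λ * (1 + c)
        * powerEnergy (discreteLapl h C₁ u) w x₀ r r' (q + (p + 2)) := by
  have hM := H.nonneg
  have hΛ := H.c11.nonneg
  have h_top := H.abs_integral_dotProduct_grad_vecMul_newtonT_le (C₁ := C₁) (s := q + (p + 2))
    hη hc hr0 hr hq hp (by push_cast; linarith) hΛ (boundedLipschitzOn_topCoeff H.c11)
  have h_lower := H.abs_integral_dotProduct_grad_vecMul_newtonT_le (C₁ := C₁)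
    (s := q + (p + 2)) hη hc hr0 hr hq hp.le (by linarith) (by positivity)
    (boundedLipschitzOn_lowerCoeff hM H.c11)
  have h_rem := H.abs_integral_esymmMat_mul_taylorRemainder_le (s := q + (p + 2)) hη hh hr hC hCM
    hq hp (by push_cast; linarith)
  have h_energy : 0 ≤ powerEnergy (discreteLapl h C₁ u) w x₀ r r' (q + (p + 2)) :=
    powerEnergy_nonneg fun x hx => zero_le_one.trans (H.one_le x hx)
  set E := powerEnergy (discreteLapl h C₁ u) w x₀ r r' (q + (p + 2))
  have hκ : 0 ≤ newtonConst n M Λ := by rw [newtonConst]; positivity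
  have h_dim : |(n : ℝ) - (p + 1)| ≤ n := by
    have hpn : (p : ℝ) + 1 ≤ n := by exact_mod_cast hp
    exact abs_le.2 ⟨by linarith, by linarith [p.cast_nonneg (α := ℝ)]⟩
  have h_cutoff : n * (1 + c) + 1 ≤ (n + 1) * (1 + c) := by linarith
  rw [H.integral_matDiv_newtonT_add hη hr hq hp, abs_mul]
  calc _ ≤ n * (n * (newtonConst n M Λ * (Λ * (1 + M)) * ((n + 1) * (1 + c))) * (2 * E)
        + n * (newtonConst n M Λ * ((Λ + 2 * (1 + M) * Λ + 2 * Λ * Λ) * (1 + M))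
          * ((n + 1) * (1 + c))) * (2 * E)
        + newtonConst n M Λ * (Λ * (1 + M) ^ 2 * (4 + 4 * n)) * E) := by
        gcongr
        refine (abs_add_le _ _).trans (add_le_add ((abs_sub _ _).trans (add_le_add ?_ ?_)) h_rem)
        exacts [h_top.trans (by gcongr), h_lower.trans (by gcongr)]
    _ = cancellationConst n M Λ * (1 + c) * E
        - n * (newtonConst n M Λ * (Λ * (1 + M) ^ 2 * (4 + 4 * n)) * (c * E)) := by
        rw [cancellationConst]
        ring
    _ ≤ _ := sub_le_self _ (by positivity)

end HessianMajorant

lemma continuousOn_lapl {n : ℕ} {u : (Fin n → ℝ) → ℝ} {s : Set (Fin n → ℝ)}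
    (hu : ∀ x ∈ s, ContDiffAt ℝ 3 u x) : ContinuousOn (lapl u) s :=
  continuousOn_finsetSum _ fun l _ => continuousOn_pd (fun x hx =>
    contDiffAt_pd ((hu x hx).of_le (by norm_num : (2 : WithTop ℕ∞) ≤ 3)) (by norm_num) l) l

lemma hessianMajorant_lapl_add_const {n : ℕ} {G : Jet n → ℝ} {u : (Fin n → ℝ) → ℝ}
    {x₀ : Fin n → ℝ} {r M Λ C₁ : ℝ} (hM : 0 ≤ M) (hG : C11BoundedOn G (jetSet x₀ r M) Λ)
    (hu : ∀ x ∈ closedBall x₀ r, ContDiffAt ℝ 3 u x)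
    (hu_le : ∀ x ∈ ball x₀ r, |u x| + vnorm (grad u x) ≤ M)
    (hw : ∀ x ∈ ball x₀ r, 1 ≤ lapl u x + C₁ ∧ matNorm (hess u x) ≤ lapl u x + C₁) :
    HessianMajorant G u (fun x => lapl u x + C₁) x₀ r M Λ where
  nonneg := hM
  c11 := hG
  contDiffAt := hu
  jet_mem x hx := jet_mem_jetSet (ball_subset_closedBall hx) (hu_le x hx)
  continuousOn := (continuousOn_lapl hu).add continuousOn_const
  one_le x hx := (hw x hx).1
  abs_hess_le x hx i j := (abs_apply_le_matNorm _ i j).trans (hw x hx).2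

theorem cancellation_higher_order_scalarH_general {n k : ℕ} (hk2 : 2 ≤ k) (hkn : k ≤ n)
    {Ω : Set (Fin n → ℝ)} (hΩ : IsOpen Ω) {H₂ : Jet n → ℝ}
    (hH₂ : C11On H₂ (Ω ×ˢ univ ×ˢ univ)) {x₀ : Fin n → ℝ} {R : ℝ} (hR : 0 < R)
    (hball : closure (ball x₀ (2 * R)) ⊆ Ω) {M : ℝ} (hM : 0 ≤ M) {c₀ : ℝ} (hc₀ : 0 ≤ c₀) :
    ∃ C : ℝ, ∀ (u : (Fin n → ℝ) → ℝ) (C₁ q ρ h : ℝ) (η : (Fin n → ℝ) → ℝ),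
      ContDiffOn ℝ 3 u Ω →
      (∀ x ∈ ball x₀ (2 * R), |u x| + vnorm (grad u x) ≤ M) →
      0 ≤ C₁ → C₁ ≤ M →
      (∀ x ∈ ball x₀ (2 * R), 1 ≤ lapl u x + C₁ ∧ matNorm (hess u x) ≤ lapl u x + C₁) →
      1 < q → 0 < ρ → ρ ≤ R / 3 → h ≠ 0 → |h| < ρ →
      IsCutoff η x₀ (R + 2 * ρ) (c₀ / ρ) →
      |(∫ x in ball x₀ (R + 2 * ρ), η x * max (discreteLapl h C₁ u x) 0 ^ (q - 1) *
          (matDiv (fun y => newtonT (k - 1) (augHess H₂ u y)) x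
            ⬝ᵥ grad (discreteLapl h C₁ u) x))
        + ∑ l, ∫ x in ball x₀ (R + 2 * ρ), η x * max (discreteLapl h C₁ u x) 0 ^ (q - 1) *
          ∑ i, ∑ j, newtonT (k - 1) (augHess H₂ u x) i j *
            ddq l h (fun y => (H₂ (jet u y) • (1 : Matrix (Fin n) (Fin n) ℝ)) i j) x|
      ≤ C / ρ * powerEnergy (discreteLapl h C₁ u) (fun x => lapl u x + C₁) x₀
          (R + 2 * ρ) (R + 3 * ρ) (q + k) := by
  obtain ⟨p, rfl⟩ := Nat.exists_eq_add_of_le' hk2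
  have h_closed : closedBall x₀ (2 * R) ⊆ Ω := by rwa [← closure_ball x₀ (by positivity)]
  obtain ⟨Λ, hΛ⟩ := hH₂.exists_c11BoundedOn (hΩ.prod (isOpen_univ.prod isOpen_univ))
    (isCompact_jetSet (x₀ := x₀) (r := 2 * R) (M := M))
    (prod_mono h_closed (prod_mono (subset_univ _) (subset_univ _)))
  refine ⟨cancellationConst n M Λ * (R + c₀),
    fun u C₁ q ρ h η hu hu_le hC hCM hw hq hρ hρR hh hhρ hη => ?_⟩
  have h_le : R + 3 * ρ ≤ 2 * R := by linarith
  have h_ball {x} (hx : x ∈ ball x₀ (R + 3 * ρ)) : x ∈ ball x₀ (2 * R) := ball_subset_ball h_le hx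
  have H := hessianMajorant_lapl_add_const hM (hΛ.mono (jetSet_subset_jetSet h_le))
    (fun x hx => hu.contDiffAt (hΩ.mem_nhds (h_closed (closedBall_subset_closedBall h_le hx))))
    (fun x hx => hu_le x (h_ball hx)) fun x hx => hw x (h_ball hx)
  have h_const := cancellationConst_nonneg (n := n) hM hΛ.nonneg
  have h_energy := powerEnergy_nonneg (V := discreteLapl h C₁ u) (r := R + 2 * ρ)
    (s := q + (p + 2)) fun x hx => zero_le_one.trans (H.one_le x hx)
  have h_factor : 1 + c₀ / ρ ≤ (R + c₀) / ρ := by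
    rw [add_div]
    gcongr
    exact (one_le_div hρ).2 (by linarith)
  refine (H.abs_integral_matDiv_newtonT_add_le (p := p) hη (by positivity) hh (by positivity)
    (by linarith) hC hCM hq (by omega)).trans ?_
  rw [mul_div_assoc]
  push_cast
  gcongr

/-- Cancellation of higher order terms, scalar-`H` case
(Corollary 4.8, estimate (K), for classical functions). -/
theorem cancellation_higher_order_scalarH
    {n : ℕ} (hn : 3 ≤ n) (k : ℕ) (hk2 : 2 ≤ k) (hkn : k ≤ n)
    (Ω : Set (Fin n → ℝ)) (hΩ : IsOpen Ω)
    (H₂ : ((Fin n → ℝ) × ℝ × (Fin n → ℝ)) → ℝ)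
    (hH₂ : C11On H₂ (Ω ×ˢ ((univ : Set ℝ) ×ˢ (univ : Set (Fin n → ℝ)))))
    (x₀ : Fin n → ℝ) (R : ℝ) (hR : 0 < R)
    (hball : closure (ball x₀ (2 * R)) ⊆ Ω)
    (M : ℝ) (hM : 0 < M) (c₀ : ℝ) (hc₀ : 0 < c₀) :
    ∃ C : ℝ, ∀ (u : (Fin n → ℝ) → ℝ) (C₁ q ρ h : ℝ) (η : (Fin n → ℝ) → ℝ),
      ContDiffOn ℝ 3 u Ω →
      (∀ x ∈ ball x₀ (2 * R), |u x| + vnorm (grad u x) ≤ M) →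
      0 ≤ C₁ → C₁ ≤ M →
      (∀ x ∈ ball x₀ (2 * R), 1 ≤ lapl u x + C₁ ∧ matNorm (hess u x) ≤ lapl u x + C₁) →
      1 < q → 0 < ρ → ρ ≤ R / 3 → h ≠ 0 → |h| < ρ →
      ContDiff ℝ (⊤ : ℕ∞) η →
      (∀ x, x ∉ ball x₀ (R + 2 * ρ) → η x = 0) →
      (∀ x, 0 ≤ η x ∧ η x ≤ 1) →
      (∀ x ∈ ball x₀ (R + ρ), η x = 1) →
      (∀ x, vnorm (grad η x) ≤ c₀ / ρ) →
      (∀ x, matNorm (hess η x) ≤ c₀ / ρ ^ 2) →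
      (∫ x in ball x₀ (R + 2 * ρ),
          η x * (max ((∑ l : Fin n, ddq l h u x) + C₁) 0) ^ (q - 1) *
            ∑ j, (∑ i, pd i (fun y => newtonT (k - 1) (hess u y -
                  H₂ (y, u y, grad u y) • (1 : Matrix (Fin n) (Fin n) ℝ)) i j) x) *
              pd j (fun y => (∑ l : Fin n, ddq l h u y) + C₁) x)
        + ∑ l : Fin n, ∫ x in ball x₀ (R + 2 * ρ),
            η x * (max ((∑ l' : Fin n, ddq l' h u x) + C₁) 0) ^ (q - 1) *
              ∑ i, ∑ j, newtonT (k - 1) (hess u x -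
                  H₂ (x, u x, grad u x) • (1 : Matrix (Fin n) (Fin n) ℝ)) i j *
                ddq l h (fun y =>
                  (H₂ (y, u y, grad u y) • (1 : Matrix (Fin n) (Fin n) ℝ)) i j) x
      ≥ -(C / ρ) *
          ((∫ x in ball x₀ (R + 2 * ρ),
              (max ((∑ l : Fin n, ddq l h u x) + C₁) 0) ^ (q + (k : ℝ)))
            + ∫ x in ball x₀ (R + 3 * ρ), (lapl u x + C₁) ^ (q + (k : ℝ))) := by
  obtain ⟨C, hC⟩ := cancellation_higher_order_scalarH_general hk2 hkn hΩ hH₂ hR hball hM.le hc₀.le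
  refine ⟨C, fun u C₁ q ρ h η hu hu_le hC₁ hCM hw hq hρ hρR hh hhρ hη hη0 hη1 _ hη_grad _ => ?_⟩
  have h_cutoff : IsCutoff η x₀ (R + 2 * ρ) (c₀ / ρ) :=
    { contDiff := hη.of_le (by exact_mod_cast le_top)
      eq_zero := hη0
      nonneg := fun x => (hη1 x).1
      le_one := fun x => (hη1 x).2
      abs_pd_le := fun x j => (abs_apply_le_vnorm (grad η x) j).trans (hη_grad x) }
  have h_abs := hC u C₁ q ρ h η hu hu_le hC₁ hCM hw hq hρ hρR hh hhρ h_cutoff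
  rw [ge_iff_le, neg_mul]
  exact (abs_le.1 h_abs).1
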